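/- arXiv:2605.02097 — 2 statements merged into one kernel-verified Lean document; each statement's English description precedes it below -/
import Mathlib

section
/- Let Ψ be a normalized q-partite pure state on ℂ^{d₁}⊗⋯⊗ℂ^{d_q} (q ≥ 2, all dimensions finite and positive). Suppose that for every party r ∈ {1,…,q}, the (q−1)-partite reduced density matrix obtained from |Ψ⟩⟨Ψ| by tracing out the r-th factor is fully separable. Then Ψ is LU-equivalent to a generalized GHZ-state: there exist unitaries U_r on ℂ^{d_r}, a positive integer R ≤ min_r d_r, and complex coefficients λ₀,…,λ_{R−1} with Σ_j |λ_j|² = 1, such that (U₁⊗⋯⊗U_q)Ψ = Σ_{j=0}^{R−1} λ_j |j⟩^{⊗q}. -/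
open scoped BigOperators
open Matrix

noncomputable section

/-- The product vector with factors `u s`, over an arbitrary finite index type. -/
def prodVec {ι : Type} [Fintype ι] (dim : ι → ℕ) (u : ∀ s, Fin (dim s) → ℂ) :
    (∀ s, Fin (dim s)) → ℂ :=
  fun v => ∏ s, u s (v s)

/-- Full separability of a multipartite density matrix over a finite index type. -/
def FullySep {ι : Type} [Fintype ι] [DecidableEq ι] (dim : ι → ℕ)
    (ρ : Matrix (∀ s, Fin (dim s)) (∀ s, Fin (dim s)) ℂ) : Prop :=
  ∃ (m : ℕ) (p : Fin m → ℝ) (u : Fin m → ∀ s, Fin (dim s) → ℂ),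
    (∀ j, 0 ≤ p j) ∧ (∑ j, p j = 1) ∧
    (∀ j, ∑ v : ∀ s, Fin (dim s), ‖prodVec dim (u j) v‖ ^ 2 = 1) ∧
    ρ = ∑ j, (p j : ℂ) • Matrix.vecMulVec (prodVec dim (u j)) (star (prodVec dim (u j)))

/-- Insert the value `k` at position `r` into an assignment of indices to the other parties. -/
def ins (q : ℕ) (d : Fin q → ℕ) (r : Fin q) (k : Fin (d r))
    (j : ∀ s : {s : Fin q // s ≠ r}, Fin (d s.1)) : ∀ s, Fin (d s) :=
  fun s => if h : s = r then Fin.cast (congrArg d h.symm) k else j ⟨s, h⟩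

/-- The reduced density matrix of the pure state `Ψ` obtained by tracing out party `r`. -/
def reduced (q : ℕ) (d : Fin q → ℕ) (Ψ : (∀ r, Fin (d r)) → ℂ) (r : Fin q) :
    Matrix (∀ s : {s : Fin q // s ≠ r}, Fin (d s.1))
      (∀ s : {s : Fin q // s ≠ r}, Fin (d s.1)) ℂ :=
  fun j j' => ∑ k : Fin (d r), Ψ (ins q d r k j) * (starRingEnd ℂ) (Ψ (ins q d r k j'))

/-!
Write `σ_r` for the one-party state at party `r`; the reduction that traces out `r` has the same
purity as `σ_r`. If this reduction is a mixture of product vectors, the squared overlap of two such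
vectors is the product of their squared local overlaps, each at most `1`, so its purity is at most
that of each of its own marginals: `tr σ_r² ≤ tr σ_s²` for `s ≠ r`. By symmetry all these purities
agree, and equality makes each such product equal to every one of its factors. With at least
two parties left, two product vectors of the mixture are therefore orthogonal at every party or
parallel at every party, and merging the parallel ones gives a mixture that is orthonormal at every
party. With one party left the spectral decomposition is such a mixture. By uniqueness of
purifications it comes from a multipartite Schmidt decomposition of `Ψ`, and local unitaries
rotate the orthonormal families to the standard bases.
-/

section LinearAlgebra

variable {𝕜 n T : Type*} [RCLike 𝕜] [Fintype n]

lemma dotProduct_star_self_eq_sum_norm_sq (x : n → 𝕜) :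
    x ⬝ᵥ star x = ((∑ a, ‖x a‖ ^ 2 : ℝ) : 𝕜) := by
  simp [dotProduct, RCLike.mul_conj]

lemma norm_toLp_eq_one_iff {x : n → 𝕜} : ‖WithLp.toLp 2 x‖ = 1 ↔ x ⬝ᵥ star x = 1 := by
  rw [EuclideanSpace.norm_eq, Real.sqrt_eq_one, dotProduct_star_self_eq_sum_norm_sq,
    ← RCLike.ofReal_one (K := 𝕜), RCLike.ofReal_inj]

lemma norm_dotProduct_star_le_one {x y : n → 𝕜} (hx : x ⬝ᵥ star x = 1)
    (hy : y ⬝ᵥ star y = 1) : ‖x ⬝ᵥ star y‖ ≤ 1 := by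
  rw [← norm_toLp_eq_one_iff] at hx hy
  simpa only [EuclideanSpace.inner_toLp_toLp, hx, hy, one_mul] using
    norm_inner_le_norm (𝕜 := 𝕜) (WithLp.toLp 2 y) (WithLp.toLp 2 x)

lemma orthonormal_toLp_iff {e : T → n → 𝕜} :
    Orthonormal 𝕜 (fun j => WithLp.toLp 2 (e j)) ↔
      (∀ j, e j ⬝ᵥ star (e j) = 1) ∧ Pairwise fun i j => e i ⬝ᵥ star (e j) = 0 := by
  simp only [Orthonormal, norm_toLp_eq_one_iff, EuclideanSpace.inner_toLp_toLp]
  exact and_congr_right' ⟨fun h _ _ hij => h hij.symm, fun h _ _ hij => h hij.symm⟩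

lemma orthonormal_toLp_iff_mul_conjTranspose [DecidableEq T] {e : T → n → 𝕜} :
    Orthonormal 𝕜 (fun j => WithLp.toLp 2 (e j)) ↔ of e * (of e)ᴴ = 1 := by
  rw [← gram_eq_one_iff_orthonormal, ← transpose_inj, transpose_one]
  rfl

lemma exists_unitary_mulVec_eq_single [DecidableEq n] {e : T → n → 𝕜}
    (he : Orthonormal 𝕜 fun j => WithLp.toLp 2 (e j)) (f : T ↪ n) :
    ∃ U ∈ unitaryGroup n 𝕜, ∀ j, U *ᵥ e j = Pi.single (f j) 1 := by
  classical
  let v : n → EuclideanSpace 𝕜 n := Function.extend f (fun j => WithLp.toLp 2 (e j)) 0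
  have hv_apply (j : T) : v (f j) = WithLp.toLp 2 (e j) := f.injective.extend_apply _ _ j
  have hv : Orthonormal 𝕜 ((Set.range f).domRestrict v) := by
    convert he.comp _ (Equiv.ofInjective f f.injective).symm.injective using 1
    ext1 ⟨_, j, rfl⟩
    simp [hv_apply, Equiv.ofInjective_symm_apply]
  obtain ⟨b, hb⟩ := hv.exists_orthonormalBasis_extension_of_card_eq finrank_euclideanSpace
  have hb_apply (j : T) : b (f j) = WithLp.toLp 2 (e j) := (hb _ ⟨j, rfl⟩).trans (hv_apply j)
  let E := EuclideanSpace.basisFun n 𝕜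
  refine ⟨_, b.toMatrix_orthonormalBasis_mem_unitary E, fun j => ?_⟩
  have hrepr := E.toBasis.toMatrix_mulVec_repr b.toBasis (b (f j))
  have hE : ⇑(E.toBasis.repr (b (f j))) = e j := by
    rw [hb_apply]
    rfl
  have hB : ⇑(b.toBasis.repr (b (f j))) = Pi.single (f j) 1 := by
    ext i
    simp [Pi.single_apply]
  rwa [hE, hB] at hrepr

lemma vecMulVec_star_eq_of_norm_dotProduct_eq_one {x y : n → 𝕜} (hx : x ⬝ᵥ star x = 1)
    (hy : y ⬝ᵥ star y = 1) (hxy : ‖x ⬝ᵥ star y‖ = 1) :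
    vecMulVec x (star x) = vecMulVec y (star y) := by
  rw [← norm_toLp_eq_one_iff] at hx
  have hy' := norm_toLp_eq_one_iff.mpr hy
  have hpar : ‖inner 𝕜 (WithLp.toLp 2 y) (WithLp.toLp 2 x)‖
      = ‖WithLp.toLp 2 y‖ * ‖WithLp.toLp 2 x‖ := by
    rw [EuclideanSpace.inner_toLp_toLp, hxy, hx, hy', one_mul]
  have hne {z : EuclideanSpace 𝕜 n} (hz : ‖z‖ = 1) : z ≠ 0 :=
    norm_ne_zero_iff.mp (hz ▸ one_ne_zero)
  obtain ⟨r, -, hr⟩ := (norm_inner_eq_norm_iff (hne hy') (hne hx)).mp hpar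
  have hxr : x = r • y := congrArg WithLp.ofLp hr
  have hr1 : r * star r = 1 := by
    rw [norm_toLp_eq_one_iff] at hx
    simpa [hxr, hy, smul_dotProduct, dotProduct_smul, mul_comm] using hx
  rw [hxr, star_smul, smul_vecMulVec, vecMulVec_smul, smul_smul, hr1, one_smul]

open ComplexOrder in
lemma eq_mul_of_mul_conjTranspose_eq {m : Type*} [Fintype m] [Fintype T] [DecidableEq T]
    {M : Matrix m n 𝕜} {V : Matrix m T 𝕜} {A : Matrix T m 𝕜} (hV : Vᴴ * V = 1)
    (hM : M * Mᴴ = V * A) : M = V * (Vᴴ * M) := by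
  classical
  have hP : (1 - V * Vᴴ) * V = 0 := by
    rw [Matrix.sub_mul, Matrix.mul_assoc, hV, Matrix.one_mul, Matrix.mul_one, sub_self]
  have hPM : (1 - V * Vᴴ) * M = 0 := by
    rw [← self_mul_conjTranspose_eq_zero, conjTranspose_mul, ← Matrix.mul_assoc,
      Matrix.mul_assoc _ M, hM, ← Matrix.mul_assoc _ V, hP, Matrix.zero_mul, Matrix.zero_mul]
  rwa [Matrix.sub_mul, Matrix.one_mul, Matrix.mul_assoc, sub_eq_zero] at hPM

lemma exists_eq_mul_of_mul_conjTranspose_eq {m : Type*} [Fintype m] [Fintype T] [DecidableEq T]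
    {M : Matrix m n 𝕜} {V : Matrix m T 𝕜} {w : T → 𝕜} (hV : Vᴴ * V = 1) (hw : ∀ t, w t ≠ 0)
    (hM : M * Mᴴ = V * diagonal w * (V * diagonal w)ᴴ) :
    ∃ G : Matrix T n 𝕜, G * Gᴴ = 1 ∧ M = V * diagonal w * G := by
  have hD : diagonal w⁻¹ * diagonal w = 1 := by
    rw [diagonal_mul_diagonal, ← diagonal_one]
    exact congrArg diagonal (funext fun t => inv_mul_cancel₀ (hw t))
  have hVM : M = V * (Vᴴ * M) :=
    eq_mul_of_mul_conjTranspose_eq hV (hM.trans (Matrix.mul_assoc _ _ _))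
  refine ⟨diagonal w⁻¹ * (Vᴴ * M), ?_, ?_⟩
  · calc diagonal w⁻¹ * (Vᴴ * M) * (diagonal w⁻¹ * (Vᴴ * M))ᴴ
        = diagonal w⁻¹ * (Vᴴ * (M * Mᴴ) * V) * (diagonal w⁻¹)ᴴ := by
          simp only [conjTranspose_mul, conjTranspose_conjTranspose, Matrix.mul_assoc]
      _ = diagonal w⁻¹ * (Vᴴ * V * diagonal w * (diagonal w)ᴴ * (Vᴴ * V)) * (diagonal w⁻¹)ᴴ := by
          simp only [hM, conjTranspose_mul, Matrix.mul_assoc]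
      _ = (diagonal w⁻¹ * diagonal w) * (diagonal w⁻¹ * diagonal w)ᴴ := by
          simp only [hV, conjTranspose_mul, Matrix.mul_assoc, Matrix.one_mul, Matrix.mul_one]
      _ = 1 := by rw [hD, conjTranspose_one, Matrix.mul_one]
  · rw [Matrix.mul_assoc, ← Matrix.mul_assoc (diagonal w), mul_eq_one_comm.mp hD,
      Matrix.one_mul, ← hVM]

end LinearAlgebra

section Mixture

variable {T n : Type*} [Fintype T]

/-- The mixture `∑ j, p j |x j⟩⟨x j|` of the pure states `x j` with weights `p j`. -/
def mixture (p : T → ℝ) (x : T → n → ℂ) : Matrix n n ℂ :=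
  ∑ j, (p j : ℂ) • vecMulVec (x j) (star (x j))

lemma mixture_apply (p : T → ℝ) (x : T → n → ℂ) (a b : n) :
    mixture p x a b = ∑ j, (p j : ℂ) * (x j a * star (x j b)) := by
  simp only [mixture, Matrix.sum_apply, Matrix.smul_apply, vecMulVec_apply, Pi.star_apply,
    smul_eq_mul]

lemma sum_subtype_pos {M : Type*} [AddCommMonoid M] {p : T → ℝ} (hp : ∀ j, 0 ≤ p j)
    {F : T → M} (hF : ∀ j, p j = 0 → F j = 0) : ∑ j : {j // 0 < p j}, F j = ∑ j, F j :=
  Fintype.sum_of_injective Subtype.val Subtype.val_injective _ _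
    (fun j hj => hF j <| (hp j).antisymm' <| not_lt.mp fun h => hj ⟨⟨j, h⟩, rfl⟩) fun _ => rfl

lemma mixture_subtype_pos {p : T → ℝ} (hp : ∀ j, 0 ≤ p j) (x : T → n → ℂ) :
    mixture (fun j : {j // 0 < p j} => p j) (fun j => x j) = mixture p x :=
  sum_subtype_pos (F := fun j => (p j : ℂ) • vecMulVec (x j) (star (x j))) hp fun j hj => by
    rw [hj, Complex.ofReal_zero, zero_smul]

lemma mixture_comp_equiv {S : Type*} [Fintype S] (f : S ≃ T) (p : T → ℝ) (x : T → n → ℂ) :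
    mixture (p ∘ f) (x ∘ f) = mixture p x :=
  f.sum_comp fun j => (p j : ℂ) • vecMulVec (x j) (star (x j))

lemma mixture_eq_mixture_fiberwise {S : Type*} [Fintype S] [DecidableEq S] {p : T → ℝ}
    {x : T → n → ℂ} {y : S → n → ℂ} (f : T → S)
    (hxy : ∀ j, vecMulVec (x j) (star (x j)) = vecMulVec (y (f j)) (star (y (f j)))) :
    mixture p x = mixture (fun i => ∑ j with f j = i, p j) y := by
  simp only [mixture, hxy, Complex.ofReal_sum, Finset.sum_smul]
  rw [← Finset.sum_fiberwise _ f]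
  refine Finset.sum_congr rfl fun i _ => Finset.sum_congr rfl fun j hj => ?_
  rw [(Finset.mem_filter.mp hj).2]

lemma mixture_eq_mul_conjTranspose [DecidableEq T] {p : T → ℝ} (hp : ∀ j, 0 ≤ p j)
    (x : T → n → ℂ) :
    mixture p x = (of x)ᵀ * diagonal (fun j => (√(p j) : ℂ)) *
      ((of x)ᵀ * diagonal (fun j => (√(p j) : ℂ)))ᴴ := by
  ext a b
  rw [mixture_apply, mul_apply]
  refine Finset.sum_congr rfl fun j _ => ?_
  have hsq : (p j : ℂ) = √(p j) * star (√(p j) : ℂ) := by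
    rw [RCLike.star_def, Complex.conj_ofReal, ← Complex.ofReal_mul, Real.mul_self_sqrt (hp j)]
  rw [conjTranspose_apply, mul_diagonal, mul_diagonal, star_mul', hsq, transpose_apply,
    transpose_apply, of_apply, of_apply]
  ring

variable [Fintype n]

open ComplexOrder in
lemma exists_mixture_of_posSemidef {ρ : Matrix n n ℂ} (hρ : ρ.PosSemidef)
    (htr : ρ.trace = 1) :
    ∃ (p : n → ℝ) (x : n → n → ℂ), (∀ j, 0 ≤ p j) ∧ ∑ j, p j = 1 ∧
      Orthonormal ℂ (fun j => WithLp.toLp 2 (x j)) ∧ ρ = mixture p x := by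
  classical
  refine ⟨hρ.1.eigenvalues, fun j => hρ.1.eigenvectorBasis j, hρ.eigenvalues_nonneg, ?_,
    hρ.1.eigenvectorBasis.orthonormal, ?_⟩
  · have hsum := hρ.1.trace_eq_sum_eigenvalues
    rw [htr] at hsum
    simpa using (congrArg Complex.re hsum).symm
  · ext a b
    conv_lhs => rw [hρ.1.spectral_theorem, Unitary.conjStarAlgAut_apply, mul_apply]
    rw [mixture_apply]
    refine Finset.sum_congr rfl fun j _ => ?_
    rw [mul_diagonal, star_apply, IsHermitian.eigenvectorUnitary_apply,
      IsHermitian.eigenvectorUnitary_apply, mul_right_comm, mul_comm]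
    rfl

/-- The purity `tr ρ²`; the real part is taken so that purities can be compared. -/
def purity (ρ : Matrix n n ℂ) : ℝ := (ρ * ρ).trace.re

lemma purity_mixture (p : T → ℝ) (x : T → n → ℂ) :
    purity (mixture p x) = ∑ i, ∑ j, p i * p j * ‖x i ⬝ᵥ star (x j)‖ ^ 2 := by
  have hterm (i j : T) :
      ((p i : ℂ) • vecMulVec (x i) (star (x i)) * (p j : ℂ) • vecMulVec (x j) (star (x j))).trace
        = (p i * p j * ‖x i ⬝ᵥ star (x j)‖ ^ 2 : ℝ) := by
    have hswap : star (x i) ⬝ᵥ x j = star (x i ⬝ᵥ star (x j)) := by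
      rw [star_dotProduct, dotProduct_comm]
    rw [Matrix.smul_mul, Matrix.mul_smul, vecMulVec_mul_vecMulVec, trace_smul, trace_smul,
      trace_vecMulVec, dotProduct_smul, hswap, smul_eq_mul, smul_eq_mul, smul_eq_mul,
      RCLike.star_def, Complex.conj_mul']
    push_cast
    ring
  simp only [purity, mixture, Finset.sum_mul_sum, trace_sum, hterm, Complex.re_sum,
    Complex.ofReal_re]

lemma purity_transpose_mul_conjTranspose {m : Type*} [Fintype m] (A : Matrix m n ℂ) :
    purity (Aᵀ * Aᵀᴴ) = purity (A * Aᴴ) := by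
  rw [conjTranspose_transpose_eq_transpose_conjTranspose, ← transpose_mul, purity, ← transpose_mul,
    trace_transpose, Matrix.mul_assoc, trace_mul_comm, purity]
  simp only [Matrix.mul_assoc]

end Mixture

section ProductVectors

variable {ι : Type} [Fintype ι] {dim : ι → ℕ}

lemma exists_prodVec_eq [Subsingleton ι] [Nonempty ι] (x : (∀ s, Fin (dim s)) → ℂ) :
    ∃ u, prodVec dim u = x := by
  have := uniqueOfSubsingleton (Classical.arbitrary ι)
  refine ⟨uniqueElim fun a => x (uniqueElim a), funext fun v => ?_⟩
  rw [prodVec, Fintype.prod_unique, uniqueElim_default]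
  congr
  exact (Equiv.piUnique _).symm_apply_apply v

variable [DecidableEq ι]

lemma prodVec_dotProduct_star (u w : ∀ s, Fin (dim s) → ℂ) :
    prodVec dim u ⬝ᵥ star (prodVec dim w) = ∏ s, u s ⬝ᵥ star (w s) := by
  simp only [dotProduct, prodVec, Pi.star_apply, Fintype.prod_sum, Finset.prod_mul_distrib,
    star_prod]

lemma exists_unit_factors {u : ∀ s, Fin (dim s) → ℂ}
    (hu : prodVec dim u ⬝ᵥ star (prodVec dim u) = 1) :
    ∃ w : ∀ s, Fin (dim s) → ℂ, (∀ s, w s ⬝ᵥ star (w s) = 1) ∧ prodVec dim w = prodVec dim u := by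
  let c (s : ι) : ℝ := ‖WithLp.toLp 2 (u s)‖
  have hc_sq (s : ι) : u s ⬝ᵥ star (u s) = (c s : ℂ) ^ 2 := by
    rw [← EuclideanSpace.inner_toLp_toLp, inner_self_eq_norm_sq_to_K]
    rfl
  have hc_prod : ∏ s, c s = 1 := by
    rw [prodVec_dotProduct_star, Finset.prod_congr rfl fun s _ => hc_sq s,
      Finset.prod_pow] at hu
    exact (pow_eq_one_iff_of_nonneg (Finset.prod_nonneg fun s _ => norm_nonneg _)
      two_ne_zero).mp (by exact_mod_cast hu)
  have hc_ne (s : ι) : (c s : ℂ) ≠ 0 := by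
    have := Finset.prod_ne_zero_iff.mp (hc_prod ▸ one_ne_zero) s (Finset.mem_univ s)
    exact_mod_cast this
  refine ⟨fun s => (c s : ℂ)⁻¹ • u s, fun s => ?_, funext fun v => ?_⟩
  · have hc_star : star (c s : ℂ)⁻¹ = (c s : ℂ)⁻¹ := by
      rw [star_inv₀, RCLike.star_def, Complex.conj_ofReal]
    rw [star_smul, smul_dotProduct, dotProduct_smul, hc_sq, hc_star, smul_smul, ← mul_inv, ← sq,
      smul_eq_mul, inv_mul_cancel₀ (pow_ne_zero 2 (hc_ne s))]
  · simp only [prodVec, Pi.smul_apply, smul_eq_mul, Finset.prod_mul_distrib,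
      Finset.prod_inv_distrib, ← Complex.ofReal_prod, hc_prod, Complex.ofReal_one, inv_one, one_mul]

lemma FullySep.exists_mixture {ρ : Matrix (∀ s, Fin (dim s)) (∀ s, Fin (dim s)) ℂ}
    (hρ : FullySep dim ρ) :
    ∃ (T : Type) (_ : Fintype T) (p : T → ℝ) (u : T → ∀ s, Fin (dim s) → ℂ),
      (∀ j, 0 < p j) ∧ ∑ j, p j = 1 ∧ (∀ j s, u j s ⬝ᵥ star (u j s) = 1) ∧
      ρ = mixture p fun j => prodVec dim (u j) := by
  obtain ⟨m, p, u, hp, hp_sum, hu, hρ⟩ := hρ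
  have hu' (j : Fin m) : prodVec dim (u j) ⬝ᵥ star (prodVec dim (u j)) = 1 := by
    rw [dotProduct_star_self_eq_sum_norm_sq, hu j]
    exact Complex.ofReal_one
  choose w hw_unit hw using fun j => exists_unit_factors (hu' j)
  refine ⟨{j // 0 < p j}, inferInstance, fun j => p j, fun j => w j, fun j => j.2, ?_,
    fun j => hw_unit j, ?_⟩
  · rw [sum_subtype_pos hp (F := p) fun _ h => h, hp_sum]
  · rw [mixture_subtype_pos hp fun j => prodVec dim (w j), hρ]
    simp only [mixture, hw]

end ProductVectors

section LocallyOrthogonal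

variable {ι : Type} [Fintype ι] {dim : ι → ℕ}

/-- A multipartite state is locally orthogonal if it is a mixture, with positive weights, of
product vectors whose factors form an orthonormal family at every party. -/
def LocallyOrthogonal (dim : ι → ℕ) (ρ : Matrix (∀ s, Fin (dim s)) (∀ s, Fin (dim s)) ℂ) : Prop :=
  ∃ (R : ℕ) (p : Fin R → ℝ) (u : Fin R → ∀ s, Fin (dim s) → ℂ),
    (∀ j, 0 < p j) ∧ ∑ j, p j = 1 ∧ (∀ s, Orthonormal ℂ fun j => WithLp.toLp 2 (u j s)) ∧
    ρ = mixture p fun j => prodVec dim (u j)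

lemma locallyOrthogonal_mixture {T : Type*} [Fintype T] {p : T → ℝ}
    {u : T → ∀ s, Fin (dim s) → ℂ} (hp : ∀ j, 0 ≤ p j) (hp_sum : ∑ j, p j = 1)
    (hu : ∀ s, Orthonormal ℂ fun j => WithLp.toLp 2 (u j s)) :
    LocallyOrthogonal dim (mixture p fun j => prodVec dim (u j)) := by
  let f := (Fintype.equivFin {j // 0 < p j}).symm
  refine ⟨_, fun j => p (f j), fun j => u (f j), fun j => (f j).2, ?_,
    fun s => (hu s).comp _ (Subtype.val_injective.comp f.injective), ?_⟩
  · rw [f.sum_comp fun j => p j, sum_subtype_pos hp (F := p) fun _ h => h, hp_sum]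
  · rw [← mixture_subtype_pos hp fun j => prodVec dim (u j)]
    exact (mixture_comp_equiv f _ _).symm

open ComplexOrder in
lemma locallyOrthogonal_of_subsingleton [DecidableEq ι] [Subsingleton ι] [Nonempty ι]
    {ρ : Matrix (∀ s, Fin (dim s)) (∀ s, Fin (dim s)) ℂ} (hρ : ρ.PosSemidef)
    (htr : ρ.trace = 1) : LocallyOrthogonal dim ρ := by
  obtain ⟨p, x, hp, hp_sum, hx, rfl⟩ := exists_mixture_of_posSemidef hρ htr
  choose u hu using fun j => exists_prodVec_eq (x j)
  obtain rfl : (fun j => prodVec dim (u j)) = x := funext hu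
  refine locallyOrthogonal_mixture hp hp_sum fun s => ?_
  have hprod (i j) : prodVec dim (u i) ⬝ᵥ star (prodVec dim (u j)) = u i s ⬝ᵥ star (u j s) := by
    rw [prodVec_dotProduct_star, Fintype.prod_subsingleton _ s]
  simpa only [orthonormal_toLp_iff, hprod] using hx

lemma locallyOrthogonal_of_dichotomy {T : Type*} [Fintype T] {p : T → ℝ}
    {u : T → ∀ s, Fin (dim s) → ℂ} (hp : ∀ j, 0 ≤ p j) (hp_sum : ∑ j, p j = 1)
    (hu : ∀ j s, u j s ⬝ᵥ star (u j s) = 1)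
    (h : ∀ i j, (∀ s, u i s ⬝ᵥ star (u j s) = 0) ∨ ∀ s, ‖u i s ⬝ᵥ star (u j s)‖ = 1) :
    LocallyOrthogonal dim (mixture p fun j => prodVec dim (u j)) := by
  classical
  let P (j : T) := vecMulVec (prodVec dim (u j)) (star (prodVec dim (u j)))
  let rep : Set.range P → T := Set.rangeSplitting P
  let cls : T → Set.range P := Set.rangeFactorization P
  have hP (j : T) : P j = P (rep (cls j)) := (Set.apply_rangeSplitting P (cls j)).symm
  have hP_eq {i j : T} (hij : ∀ s, ‖u i s ⬝ᵥ star (u j s)‖ = 1) : P i = P j := by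
    refine vecMulVec_star_eq_of_norm_dotProduct_eq_one ?_ ?_ ?_ <;>
      simp only [prodVec_dotProduct_star, hu, norm_prod, hij, Finset.prod_const_one]
  have hmerge : mixture p (fun j => prodVec dim (u j))
      = mixture (fun c => ∑ j with cls j = c, p j) fun c => prodVec dim (u (rep c)) :=
    mixture_eq_mixture_fiberwise cls hP
  rw [hmerge]
  refine locallyOrthogonal_mixture (fun c => Finset.sum_nonneg fun j _ => hp j)
    (by rw [Finset.sum_fiberwise, hp_sum]) fun s => orthonormal_toLp_iff.mpr
      ⟨fun c => hu _ s, fun c c' hcc' => ?_⟩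
  refine (h (rep c) (rep c')).elim (fun h0 => h0 s) fun h1 => absurd ?_ hcc'
  rw [← Subtype.val_inj, ← Set.apply_rangeSplitting P c, ← Set.apply_rangeSplitting P c']
  exact hP_eq h1

end LocallyOrthogonal

section Marginals

variable {ι : Type} [DecidableEq ι]

section PiSplitAt

variable {β : ι → Type*} {r : ι}

lemma piSplitAt_symm_self (a : β r) (w : ∀ s : {s // s ≠ r}, β s) :
    (Equiv.piSplitAt r β).symm (a, w) r = a := by
  simp [Equiv.piSplitAt]

lemma piSplitAt_symm_of_ne (a : β r) (w : ∀ s : {s // s ≠ r}, β s) {s : ι} (hs : s ≠ r) :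
    (Equiv.piSplitAt r β).symm (a, w) s = w ⟨s, hs⟩ := by
  simp [Equiv.piSplitAt, hs]

lemma piSplitAt_symm_eq_update (a b : β r) (w : ∀ s : {s // s ≠ r}, β s) :
    Function.update ((Equiv.piSplitAt r β).symm (a, w)) r b
      = (Equiv.piSplitAt r β).symm (b, w) := by
  refine Function.update_eq_iff.mpr ⟨(piSplitAt_symm_self b w).symm, fun s hs => ?_⟩
  rw [piSplitAt_symm_of_ne a w hs, piSplitAt_symm_of_ne b w hs]

lemma update_piSplitAt_symm_of_ne (a : β r) (w : ∀ s : {s // s ≠ r}, β s) (s : {s // s ≠ r})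
    (b : β s) :
    Function.update ((Equiv.piSplitAt r β).symm (a, w)) s b
      = (Equiv.piSplitAt r β).symm (a, Function.update w s b) := by
  refine Function.update_eq_iff.mpr ⟨?_, fun t hts => ?_⟩
  · rw [piSplitAt_symm_of_ne _ _ s.2, Function.update_self]
  · by_cases htr : t = r
    · subst htr
      rw [piSplitAt_symm_self, piSplitAt_symm_self]
    · rw [piSplitAt_symm_of_ne a w htr, piSplitAt_symm_of_ne _ _ htr,
        Function.update_of_ne (fun h => hts (congrArg Subtype.val h))]

lemma sum_piSplitAt_symm [Fintype ι] [∀ s, Fintype (β s)] {M : Type*} [AddCommMonoid M]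
    (F : (∀ s, β s) → M) :
    ∑ v, F v = ∑ a, ∑ w, F ((Equiv.piSplitAt r β).symm (a, w)) := by
  rw [← (Equiv.piSplitAt r β).symm.sum_comp, Fintype.sum_prod_type]

lemma sum_filter_eq_sum_piSplitAt_symm [Fintype ι] [∀ s, Fintype (β s)] [DecidableEq (β r)]
    {M : Type*} [AddCommMonoid M] (F : (∀ s, β s) → M) (a : β r) :
    ∑ v with v r = a, F v = ∑ w, F ((Equiv.piSplitAt r β).symm (a, w)) := by
  rw [Finset.sum_filter, sum_piSplitAt_symm (r := r), Fintype.sum_eq_single a]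
  · simp only [piSplitAt_symm_self, if_true]
  · intro b hb
    simp only [piSplitAt_symm_self, if_neg hb, Finset.sum_const_zero]

end PiSplitAt

variable [Fintype ι] {dim : ι → ℕ}

lemma prodVec_piSplitAt_symm (u : ∀ s, Fin (dim s) → ℂ) {r : ι} (a : Fin (dim r))
    (w : ∀ s : {s // s ≠ r}, Fin (dim s)) :
    prodVec dim u ((Equiv.piSplitAt r _).symm (a, w))
      = u r a * prodVec (fun s : {s // s ≠ r} => dim s) (fun s => u s) w := by
  rw [prodVec, Fintype.prod_eq_mul_prod_subtype_ne _ r, piSplitAt_symm_self]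
  exact congrArg _ <| Finset.prod_congr rfl fun s _ => by
    rw [piSplitAt_symm_of_ne (β := fun s => Fin (dim s)) a w s.2]

/-- The one-party reduced state at party `s`: all other factors are traced out. Both index tuples
range over the extensions of `a` and `b` that agree away from `s`. -/
def marginal (dim : ι → ℕ) (ρ : Matrix (∀ s, Fin (dim s)) (∀ s, Fin (dim s)) ℂ) (s : ι) :
    Matrix (Fin (dim s)) (Fin (dim s)) ℂ :=
  fun a b => ∑ v with v s = a, ρ v (Function.update v s b)

lemma marginal_apply (ρ : Matrix (∀ s, Fin (dim s)) (∀ s, Fin (dim s)) ℂ) {s : ι}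
    (a b : Fin (dim s)) :
    marginal dim ρ s a b
      = ∑ w, ρ ((Equiv.piSplitAt s _).symm (a, w)) ((Equiv.piSplitAt s _).symm (b, w)) := by
  rw [marginal, sum_filter_eq_sum_piSplitAt_symm fun v => ρ v (Function.update v s b)]
  simp only [piSplitAt_symm_eq_update]

lemma marginal_mixture {T : Type*} [Fintype T] (p : T → ℝ) {u : T → ∀ s, Fin (dim s) → ℂ}
    (hu : ∀ j s, u j s ⬝ᵥ star (u j s) = 1) (s : ι) :
    marginal dim (mixture p fun j => prodVec dim (u j)) s = mixture p fun j => u j s := by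
  ext a b
  have hrest (j : T) : ∑ w, prodVec (fun t : {t // t ≠ s} => dim t) (fun t => u j t) w *
      star (prodVec (fun t : {t // t ≠ s} => dim t) (fun t => u j t) w) = 1 :=
    (prodVec_dotProduct_star _ _).trans (Finset.prod_eq_one fun t _ => hu j t)
  simp only [marginal_apply, mixture_apply, prodVec_piSplitAt_symm, star_mul',
    mul_mul_mul_comm _ (prodVec _ _ _)]
  rw [Finset.sum_comm]
  simp only [← Finset.mul_sum, hrest, mul_one]

/-- The amplitudes of `Ψ` as a matrix, with the indices of all parties but `r` as rows and those
of party `r` as columns; `C * Cᴴ` is then the state reduced by tracing out `r`. -/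
def cutMatrix (Ψ : (∀ s, Fin (dim s)) → ℂ) (r : ι) :
    Matrix (∀ s : {s // s ≠ r}, Fin (dim s)) (Fin (dim r)) ℂ :=
  fun w a => Ψ ((Equiv.piSplitAt r _).symm (a, w))

lemma marginal_vecMulVec_star (Ψ : (∀ s, Fin (dim s)) → ℂ) (r : ι) :
    marginal dim (vecMulVec Ψ (star Ψ)) r = (cutMatrix Ψ r)ᵀ * (cutMatrix Ψ r)ᵀᴴ := by
  ext a b
  rw [marginal_apply]
  rfl

lemma marginal_cutMatrix_mul_conjTranspose (Ψ : (∀ s, Fin (dim s)) → ℂ) {r : ι}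
    (s : {s // s ≠ r}) :
    marginal (fun s : {s // s ≠ r} => dim s) (cutMatrix Ψ r * (cutMatrix Ψ r)ᴴ) s
      = marginal dim (vecMulVec Ψ (star Ψ)) s := by
  ext a b
  simp only [marginal, Finset.sum_filter]
  rw [sum_piSplitAt_symm (r := r), Finset.sum_comm]
  simp only [piSplitAt_symm_of_ne _ _ s.2, update_piSplitAt_symm_of_ne]
  refine Finset.sum_congr rfl fun w _ => ?_
  split_ifs with h
  · rfl
  · exact Finset.sum_const_zero.symm

lemma trace_cutMatrix_mul_conjTranspose (Ψ : (∀ s, Fin (dim s)) → ℂ) (r : ι) :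
    (cutMatrix Ψ r * (cutMatrix Ψ r)ᴴ).trace = Ψ ⬝ᵥ star Ψ := by
  rw [dotProduct, sum_piSplitAt_symm (r := r), Finset.sum_comm]
  rfl

end Marginals

section Purity

lemma forall_eq_zero_or_forall_eq_one_of_eq_prod {ι : Type*} [Fintype ι] [Nontrivial ι]
    {c : ι → ℝ} (hc : ∀ s, 0 ≤ c s) (hprod : ∀ s, c s = ∏ t, c t) :
    (∀ s, c s = 0) ∨ ∀ s, c s = 1 := by
  generalize hP : ∏ t, c t = P at hprod
  have hpow : P * P ^ (Fintype.card ι - 1) = P * 1 := by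
    rw [mul_pow_sub_one Fintype.card_ne_zero, mul_one]
    simpa only [hprod, Finset.prod_const, Finset.card_univ] using hP
  rcases mul_eq_mul_left_iff.mp hpow with h | h
  · refine Or.inr fun s => ?_
    rw [hprod s]
    exact (pow_eq_one_iff_of_nonneg (hprod s ▸ hc s)
      (Nat.sub_ne_zero_of_lt Fintype.one_lt_card)).mp h
  · exact Or.inl fun s => (hprod s).trans h

variable {ι : Type} [Fintype ι] {dim : ι → ℕ}

lemma prod_norm_dotProduct_sq_le {u w : ∀ s, Fin (dim s) → ℂ}
    (hu : ∀ s, u s ⬝ᵥ star (u s) = 1) (hw : ∀ s, w s ⬝ᵥ star (w s) = 1) (s : ι) :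
    ∏ t, ‖u t ⬝ᵥ star (w t)‖ ^ 2 ≤ ‖u s ⬝ᵥ star (w s)‖ ^ 2 := by
  rw [← Finset.prod_singleton (fun t => ‖u t ⬝ᵥ star (w t)‖ ^ 2) s]
  exact Finset.prod_le_prod_of_subset_of_le_one (Finset.subset_univ _) (fun _ _ => sq_nonneg _)
    fun t _ _ => pow_le_one₀ (norm_nonneg _) (norm_dotProduct_star_le_one (hu t) (hw t))

variable [DecidableEq ι]

lemma purity_mixture_prodVec {T : Type*} [Fintype T] (p : T → ℝ)
    (u : T → ∀ s, Fin (dim s) → ℂ) :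
    purity (mixture p fun j => prodVec dim (u j))
      = ∑ i, ∑ j, p i * p j * ∏ s, ‖u i s ⬝ᵥ star (u j s)‖ ^ 2 := by
  simp only [purity_mixture, prodVec_dotProduct_star, norm_prod, Finset.prod_pow]

variable {ρ : Matrix (∀ s, Fin (dim s)) (∀ s, Fin (dim s)) ℂ}

lemma FullySep.purity_le_purity_marginal (hρ : FullySep dim ρ) (s : ι) :
    purity ρ ≤ purity (marginal dim ρ s) := by
  obtain ⟨T, _, p, u, hp, -, hu, rfl⟩ := hρ.exists_mixture
  rw [marginal_mixture p hu, purity_mixture_prodVec, purity_mixture]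
  exact Finset.sum_le_sum fun i _ => Finset.sum_le_sum fun j _ =>
    mul_le_mul_of_nonneg_left (prod_norm_dotProduct_sq_le (hu i) (hu j) s)
      (mul_pos (hp i) (hp j)).le

lemma FullySep.locallyOrthogonal_of_purity_marginal_eq [Nontrivial ι] (hρ : FullySep dim ρ)
    (h : ∀ s, purity (marginal dim ρ s) = purity ρ) : LocallyOrthogonal dim ρ := by
  obtain ⟨T, _, p, u, hp, hp_sum, hu, rfl⟩ := hρ.exists_mixture
  have hle (s : ι) (i j : T) : p i * p j * ∏ t, ‖u i t ⬝ᵥ star (u j t)‖ ^ 2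
      ≤ p i * p j * ‖u i s ⬝ᵥ star (u j s)‖ ^ 2 :=
    mul_le_mul_of_nonneg_left (prod_norm_dotProduct_sq_le (hu i) (hu j) s)
      (mul_pos (hp i) (hp j)).le
  have heq (i j : T) (s : ι) :
      ‖u i s ⬝ᵥ star (u j s)‖ ^ 2 = ∏ t, ‖u i t ⬝ᵥ star (u j t)‖ ^ 2 := by
    have hs := (h s).symm
    rw [marginal_mixture p hu, purity_mixture_prodVec, purity_mixture,
      Finset.sum_eq_sum_iff_of_le fun i _ => Finset.sum_le_sum fun j _ => hle s i j] at hs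
    have hij := (Finset.sum_eq_sum_iff_of_le fun j _ => hle s i j).mp (hs i (Finset.mem_univ i)) j
      (Finset.mem_univ j)
    exact (mul_left_cancel₀ (mul_pos (hp i) (hp j)).ne' hij).symm
  refine locallyOrthogonal_of_dichotomy (fun j => (hp j).le) hp_sum hu fun i j => ?_
  refine (forall_eq_zero_or_forall_eq_one_of_eq_prod (fun s => sq_nonneg _) (heq i j)).imp
    (fun h0 s => ?_) fun h1 s => ?_
  · exact norm_eq_zero.mp (pow_eq_zero_iff two_ne_zero |>.mp (h0 s))
  · exact (pow_eq_one_iff_of_nonneg (norm_nonneg _) two_ne_zero).mp (h1 s)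

open ComplexOrder in
lemma exists_locallyOrthogonal_cutMatrix [Nontrivial ι] {Ψ : (∀ s, Fin (dim s)) → ℂ}
    (hΨ : Ψ ⬝ᵥ star Ψ = 1)
    (hsep : ∀ r, FullySep (fun s : {s // s ≠ r} => dim s) (cutMatrix Ψ r * (cutMatrix Ψ r)ᴴ)) :
    ∃ r, LocallyOrthogonal (fun s : {s // s ≠ r} => dim s)
      (cutMatrix Ψ r * (cutMatrix Ψ r)ᴴ) := by
  let σ (s : ι) := marginal dim (vecMulVec Ψ (star Ψ)) s
  have hσ (r : ι) : purity (cutMatrix Ψ r * (cutMatrix Ψ r)ᴴ) = purity (σ r) := by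
    rw [← purity_transpose_mul_conjTranspose, ← marginal_vecMulVec_star]
  have hσ_le {r s : ι} (hs : s ≠ r) : purity (σ r) ≤ purity (σ s) := by
    have := (hsep r).purity_le_purity_marginal ⟨s, hs⟩
    rwa [marginal_cutMatrix_mul_conjTranspose, hσ] at this
  obtain ⟨r, r', hr⟩ := exists_pair_ne ι
  have : Nonempty {s // s ≠ r} := ⟨⟨r', hr.symm⟩⟩
  refine ⟨r, (subsingleton_or_nontrivial {s // s ≠ r}).elim (fun _ => ?_) fun _ => ?_⟩
  · exact locallyOrthogonal_of_subsingleton (posSemidef_self_mul_conjTranspose _)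
      (by rw [trace_cutMatrix_mul_conjTranspose, hΨ])
  · refine (hsep r).locallyOrthogonal_of_purity_marginal_eq fun s => ?_
    rw [marginal_cutMatrix_mul_conjTranspose, hσ]
    exact (hσ_le s.2.symm).antisymm (hσ_le s.2)

end Purity

section SchmidtForm

variable {ι : Type} [Fintype ι] [DecidableEq ι] {dim : ι → ℕ}

lemma orthonormal_prodVec [Nonempty ι] {T : Type*} {u : T → ∀ s, Fin (dim s) → ℂ}
    (hu : ∀ s, Orthonormal ℂ fun j => WithLp.toLp 2 (u j s)) :
    Orthonormal ℂ fun j => WithLp.toLp 2 (prodVec dim (u j)) := by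
  simp only [orthonormal_toLp_iff, prodVec_dotProduct_star] at hu ⊢
  refine ⟨fun j => Finset.prod_eq_one fun s _ => (hu s).1 j, fun i j hij => ?_⟩
  exact Finset.prod_eq_zero (Finset.mem_univ (Classical.arbitrary ι)) ((hu _).2 hij)

lemma exists_schmidt_form_of_locallyOrthogonal [Nontrivial ι] {Ψ : (∀ s, Fin (dim s)) → ℂ}
    {r : ι} (hr : LocallyOrthogonal (fun s : {s // s ≠ r} => dim s)
      (cutMatrix Ψ r * (cutMatrix Ψ r)ᴴ)) :
    ∃ (R : ℕ) (lam : Fin R → ℂ) (e : Fin R → ∀ s, Fin (dim s) → ℂ),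
      ∑ j, ‖lam j‖ ^ 2 = 1 ∧ (∀ s, Orthonormal ℂ fun j => WithLp.toLp 2 (e j s)) ∧
      Ψ = ∑ j, lam j • prodVec dim (e j) := by
  obtain ⟨R, p, u, hp, hp_sum, hu, hρ⟩ := hr
  let X : Matrix (Fin R) (∀ s : {s // s ≠ r}, Fin (dim s)) ℂ := of fun j => prodVec _ (u j)
  have hX : Xᵀᴴ * Xᵀ = 1 := by
    obtain ⟨s, hs⟩ := exists_ne r
    have : Nonempty {s // s ≠ r} := ⟨⟨s, hs⟩⟩
    rw [conjTranspose_transpose_eq_transpose_conjTranspose, ← transpose_mul,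
      orthonormal_toLp_iff_mul_conjTranspose.mp (orthonormal_prodVec hu), transpose_one]
  have hw (j : Fin R) : (√(p j) : ℂ) ≠ 0 :=
    Complex.ofReal_ne_zero.mpr (Real.sqrt_pos.mpr (hp j)).ne'
  rw [mixture_eq_mul_conjTranspose fun j => (hp j).le] at hρ
  obtain ⟨G, hG, hΨ⟩ := exists_eq_mul_of_mul_conjTranspose_eq hX hw hρ
  obtain ⟨e, he_self, he_ne⟩ : ∃ e : Fin R → ∀ s, Fin (dim s) → ℂ,
      (∀ j, e j r = G j) ∧ ∀ j (s : {s // s ≠ r}), e j s = u j s :=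
    ⟨fun j => (Equiv.piSplitAt r _).symm (G j, u j), fun j => piSplitAt_symm_self _ _,
      fun j s => piSplitAt_symm_of_ne _ _ s.2⟩
  refine ⟨R, fun j => √(p j), e, ?_, fun s => ?_, ?_⟩
  · simp only [Complex.norm_real, Real.norm_eq_abs, sq_abs, Real.sq_sqrt (hp _).le, hp_sum]
  · by_cases hs : s = r
    · subst hs
      simpa only [he_self] using orthonormal_toLp_iff_mul_conjTranspose.mpr hG
    · simpa only [he_ne _ ⟨s, hs⟩] using hu ⟨s, hs⟩
  · ext v
    obtain ⟨⟨a, w⟩, rfl⟩ := (Equiv.piSplitAt r _).symm.surjective v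
    have hΨ_apply : Ψ ((Equiv.piSplitAt r _).symm (a, w)) = _ := congrFun (congrFun hΨ w) a
    rw [hΨ_apply, mul_apply, Finset.sum_apply]
    refine Finset.sum_congr rfl fun j _ => ?_
    simp only [mul_diagonal, transpose_apply, X, of_apply, Pi.smul_apply, smul_eq_mul,
      prodVec_piSplitAt_symm, he_self, he_ne]
    ring

lemma sum_prod_mul_prodVec (U : ∀ s, Matrix (Fin (dim s)) (Fin (dim s)) ℂ)
    (u : ∀ s, Fin (dim s) → ℂ) (v : ∀ s, Fin (dim s)) :
    ∑ w, (∏ s, U s (v s) (w s)) * prodVec dim u w = prodVec dim (fun s => U s *ᵥ u s) v := by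
  simp only [prodVec, mulVec, dotProduct, ← Finset.prod_mul_distrib, Fintype.prod_sum]

lemma exists_unitaries_of_schmidt_form {R : ℕ} (lam : Fin R → ℂ)
    {e : Fin R → ∀ s, Fin (dim s) → ℂ}
    (he : ∀ s, Orthonormal ℂ fun j => WithLp.toLp 2 (e j s)) :
    ∃ U : ∀ s, Matrix (Fin (dim s)) (Fin (dim s)) ℂ,
      (∀ s, R ≤ dim s) ∧ (∀ s, U s ∈ unitaryGroup (Fin (dim s)) ℂ) ∧
      ∀ v : ∀ s, Fin (dim s),
        ∑ w, (∏ s, U s (v s) (w s)) * (∑ j, lam j • prodVec dim (e j)) w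
          = ∑ j : Fin R, if ∀ s, (v s : ℕ) = (j : ℕ) then lam j else 0 := by
  have hR (s : ι) : R ≤ dim s := by
    simpa using (he s).linearIndependent.fintype_card_le_finrank
  choose U hU hUe using fun s => exists_unitary_mulVec_eq_single (he s) (Fin.castLEEmb (hR s))
  refine ⟨U, hR, hU, fun v => ?_⟩
  simp only [Finset.sum_apply, Pi.smul_apply, smul_eq_mul, Finset.mul_sum, mul_left_comm _ (lam _)]
  rw [Finset.sum_comm]
  simp only [← Finset.mul_sum, sum_prod_mul_prodVec, hUe]
  refine Finset.sum_congr rfl fun j _ => ?_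
  simp [prodVec, Pi.single_apply, Finset.prod_ite_zero, Fin.ext_iff]

end SchmidtForm

lemma reduced_eq_cutMatrix_mul_conjTranspose {q : ℕ} {d : Fin q → ℕ} (Ψ : (∀ r, Fin (d r)) → ℂ)
    (r : Fin q) : reduced q d Ψ r = cutMatrix Ψ r * (cutMatrix Ψ r)ᴴ := by
  have hins (k : Fin (d r)) (j) : ins q d r k j = (Equiv.piSplitAt r _).symm (k, j) := by
    funext s
    by_cases hs : s = r
    · subst hs
      rw [piSplitAt_symm_self]
      simp [ins]
    · rw [piSplitAt_symm_of_ne _ _ hs, ins, dif_neg hs]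
  ext j j'
  simp only [reduced, hins]
  rfl

theorem all_reductions_fullySep_implies_GHZ
    (q : ℕ) (hq : 2 ≤ q) (d : Fin q → ℕ) (hd : ∀ r, 0 < d r)
    (Ψ : (∀ r, Fin (d r)) → ℂ)
    (hΨ : ∑ v : ∀ r, Fin (d r), ‖Ψ v‖ ^ 2 = 1)
    (hsep : ∀ r : Fin q,
      FullySep (fun s : {s : Fin q // s ≠ r} => d s.1) (reduced q d Ψ r)) :
    ∃ (U : ∀ r, Matrix (Fin (d r)) (Fin (d r)) ℂ) (R : ℕ) (lam : Fin R → ℂ),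
      0 < R ∧ (∀ r, R ≤ d r) ∧
      (∀ r, U r * (U r)ᴴ = 1) ∧ (∀ r, (U r)ᴴ * U r = 1) ∧
      (∑ j, ‖lam j‖ ^ 2 = 1) ∧
      ∀ v : ∀ r, Fin (d r),
        (∑ w : ∀ r, Fin (d r), (∏ r, U r (v r) (w r)) * Ψ w)
          = ∑ j : Fin R, if ∀ r, (v r : ℕ) = (j : ℕ) then lam j else 0 := by
  have : Nontrivial (Fin q) := Fin.nontrivial_iff_two_le.mpr hq
  have hΨ_unit : Ψ ⬝ᵥ star Ψ = 1 := by
    rw [dotProduct_star_self_eq_sum_norm_sq, hΨ]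
    exact Complex.ofReal_one
  simp only [reduced_eq_cutMatrix_mul_conjTranspose] at hsep
  obtain ⟨r, hr⟩ := exists_locallyOrthogonal_cutMatrix hΨ_unit hsep
  obtain ⟨R, lam, e, hlam, he, rfl⟩ := exists_schmidt_form_of_locallyOrthogonal hr
  obtain ⟨U, hR, hU, hUΨ⟩ := exists_unitaries_of_schmidt_form lam he
  have hR_pos : 0 < R := by
    refine Nat.pos_of_ne_zero ?_
    rintro rfl
    exact zero_ne_one hlam
  exact ⟨U, R, lam, hR_pos, hR, fun r => mem_unitaryGroup_iff.mp (hU r),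
    fun r => mem_unitaryGroup_iff'.mp (hU r), hlam, fun v => by convert hUΨ v⟩

end
end

section
/- For every three-qubit pure state Ψ (unit vector in ℂ²⊗ℂ²⊗ℂ²), the third-order negativity satisfies I₅(Ψ) ≥ 2/9, and equality holds if and only if Ψ is LU-equivalent to the W-state (|100⟩+|010⟩+|001⟩)/√3. -/
open scoped BigOperators
open Matrix

noncomputable section

abbrev Q3 : Type := Fin 2 × Fin 2 × Fin 2

/-- Partial transpose over the second tensor factor. -/
def ptranspose {d d' : ℕ} (M : Matrix (Fin d × Fin d') (Fin d × Fin d') ℂ) :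
    Matrix (Fin d × Fin d') (Fin d × Fin d') ℂ :=
  fun p q => M (p.1, q.2) (q.1, p.2)

/-- Reduced density matrix `ρ_BC` of a three-qubit pure state. -/
def rhoBC (Ψ : Q3 → ℂ) : Matrix (Fin 2 × Fin 2) (Fin 2 × Fin 2) ℂ :=
  fun p q => ∑ a : Fin 2, Ψ (a, p.1, p.2) * (starRingEnd ℂ) (Ψ (a, q.1, q.2))

/-- Third-order negativity of a three-qubit pure state. -/
def I5 (Ψ : Q3 → ℂ) : ℝ :=
  ((ptranspose (rhoBC Ψ)) ^ 3).trace.re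

/-- `LUequiv Ψ Ψ'` : `Ψ' = (U_A ⊗ U_B ⊗ U_C) Ψ` for some `2×2` unitaries. -/
def LUequiv (Ψ Ψ' : Q3 → ℂ) : Prop :=
  ∃ UA UB UC : Matrix (Fin 2) (Fin 2) ℂ,
    UA * UAᴴ = 1 ∧ UAᴴ * UA = 1 ∧
    UB * UBᴴ = 1 ∧ UBᴴ * UB = 1 ∧
    UC * UCᴴ = 1 ∧ UCᴴ * UC = 1 ∧
    ∀ v : Q3, Ψ' v = ∑ w : Q3, UA v.1 w.1 * UB v.2.1 w.2.1 * UC v.2.2 w.2.2 * Ψ w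

/-- The three-qubit W-state. -/
def Wstate : Q3 → ℂ := fun v =>
  if v = (1, 0, 0) ∨ v = (0, 1, 0) ∨ v = (0, 0, 1)
    then ((Real.sqrt 3 : ℝ) : ℂ)⁻¹ else 0

/-!
Writing `ρ_BC^Γ` as the sum of `(M a ⊗ (M a)ᴴ) · swap` over the slices `M a` of `Ψ` turns `I5 Ψ`
into a sum of traces of words of length six in the `M a` and `(M a)ᴴ`. As the index `a` takes only
two values, antisymmetrizing over three copies of it gives zero, and this yields the identity
`I5 Ψ = 3 Tr((ρ_B ⊗ ρ_C) ρ_BC) - Tr ρ_B³ - Tr ρ_C³`.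

Local unitaries diagonalize `ρ_B` and `ρ_C`, with decreasing eigenvalues. Then the right-hand side
depends only on the joint distribution `P b c = ∑ a, |Ψ (a, b, c)|²`, and in terms of the eigenvalue
gaps `x, y ≥ 0` it equals `1/4 - 3/4 · xy(1 - x - y) + 3xy · P 1 1`, which is at least `2/9` by the
AM-GM inequality. Equality forces `P` to have entries `1/3, 1/3, 1/3, 0`. The vanishing off-diagonal
entries of `ρ_B` and `ρ_C` then make the vectors `Ψ (·, 0, 1)` and `Ψ (·, 1, 0)` both orthogonal to
`Ψ (·, 0, 0)`, hence proportional, and local unitaries take the W-state to `Ψ`.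
-/

section SwapTrick

open scoped Kronecker

variable {l m n p r s R : Type*} [Fintype n] [CommSemiring R]

theorem kronecker_swap_mul_kronecker_swap [Fintype l] (X : Matrix m n R) (Y : Matrix p l R)
    (X' : Matrix l r R) (Y' : Matrix n s R) :
    (X ⊗ₖ Y).submatrix id Prod.swap * (X' ⊗ₖ Y').submatrix id Prod.swap =
      (X * Y') ⊗ₖ (Y * X') := by
  have flip : (X' ⊗ₖ Y').submatrix id Prod.swap =
      (Y' ⊗ₖ X').submatrix (Equiv.prodComm l n) id := by
    ext ⟨i, j⟩ ⟨k, i'⟩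
    exact mul_comm _ _
  rw [flip, mul_kronecker_mul]
  exact submatrix_mul_equiv _ _ id (Equiv.prodComm l n) id

variable [Fintype m]

theorem trace_kronecker_swap (X : Matrix m n R) (Y : Matrix n m R) :
    ((X ⊗ₖ Y).submatrix id Prod.swap).trace = (X * Y).trace := by
  simp only [trace, diag_apply, mul_apply, submatrix_apply, kroneckerMap_apply,
    Fintype.sum_prod_type, id_eq, Prod.swap_prod_mk]

theorem trace_kronecker_swap_mul_three (X₁ X₂ X₃ : Matrix m n R) (Y₁ Y₂ Y₃ : Matrix n m R) :
    ((X₁ ⊗ₖ Y₁).submatrix id Prod.swap * (X₂ ⊗ₖ Y₂).submatrix id Prod.swap *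
      (X₃ ⊗ₖ Y₃).submatrix id Prod.swap).trace = (X₁ * Y₂ * X₃ * Y₁ * X₂ * Y₃).trace := by
  have product : (X₁ ⊗ₖ Y₁).submatrix id Prod.swap * (X₂ ⊗ₖ Y₂).submatrix id Prod.swap *
      (X₃ ⊗ₖ Y₃).submatrix id Prod.swap =
        ((X₁ * Y₂ * X₃) ⊗ₖ (Y₁ * X₂ * Y₃)).submatrix id Prod.swap := by
    rw [kronecker_swap_mul_kronecker_swap X₁ Y₁ X₂ Y₂, mul_kronecker_mul (X₁ * Y₂)]
    rfl
  rw [product, trace_kronecker_swap]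
  simp only [Matrix.mul_assoc]

end SwapTrick

section Kraus

variable {ι κ m n p q R : Type*} [Fintype ι] [Fintype κ] [Fintype m] [Fintype n]
  [CommRing R] [StarRing R]

/-- The completely positive map `X ↦ ∑ a, M a * X * (M a)ᴴ` with Kraus operators `M`. If `M a b c`
are the coefficients of a tripartite vector, then `krausMap M 1` is its marginal on the second
factor, and `krausMap (fun a ↦ (M a)ᴴ) 1` is the transpose of its marginal on the third. -/
def krausMap (M : ι → Matrix m n R) (X : Matrix n n R) : Matrix m m R :=
  ∑ a, M a * X * (M a)ᴴ

/-- Kempe's invariant `3 Tr((ρ_B ⊗ ρ_C) ρ_BC) - Tr ρ_B³ - Tr ρ_C³` of the tripartite vector with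
coefficients `M a b c`, in terms of Kraus maps. -/
def kempe [DecidableEq m] [DecidableEq n] (M : ι → Matrix m n R) : R :=
  3 * (krausMap M (krausMap (fun a ↦ (M a)ᴴ) 1) * krausMap M 1).trace
    - (krausMap M 1 ^ 3).trace - (krausMap (fun a ↦ (M a)ᴴ) 1 ^ 3).trace

/-- The action of `W ⊗ U ⊗ Vᵀ` on the tripartite vector with coefficients `M a b c`. -/
def localTransform (W : Matrix κ ι R) (U : Matrix p m R) (V : Matrix n q R)
    (M : ι → Matrix m n R) : κ → Matrix p q R :=
  fun a ↦ ∑ b, W a b • (U * M b * V)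

end Kraus

section KempeIdentity

variable {m n R : Type*} [Fintype m] [Fintype n] [CommRing R] [StarRing R]

-- Antisymmetrizing three qubit indices gives zero, since two of them coincide.
theorem sum_even_perm_eq_sum_odd_perm {α : Type*} [AddCommMonoid α]
    (T : Fin 2 → Fin 2 → Fin 2 → α) (a b c : Fin 2) :
    T a b c + T b c a + T c a b = T b a c + T a c b + T c b a := by
  obtain rfl | rfl | rfl : a = b ∨ b = c ∨ c = a := by lia
  all_goals abel

theorem sum_pow_three {ι A : Type*} [Fintype ι] [Semiring A] (f : ι → A) :
    (∑ a, f a) ^ 3 = ∑ a, ∑ b, ∑ c, f a * f b * f c := by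
  rw [pow_three', Finset.sum_mul_sum, Finset.sum_mul]
  exact Finset.sum_congr rfl fun a _ ↦ Finset.sum_mul_sum _ _ _ _

variable {ι : Type*}

/-- The trace of a word of degree six in the slices of a tripartite vector and their adjoints; sums
of these give the local unitary invariants of degree six. -/
def sixTrace (M : ι → Matrix m n R) (a x b y c z : ι) : R :=
  (M a * (M x)ᴴ * M b * (M y)ᴴ * M c * (M z)ᴴ).trace

theorem sixTrace_cycle (M : ι → Matrix m n R) (a x b y c z : ι) :
    sixTrace M a x b y c z = sixTrace M b y c z a x := by
  simpa only [sixTrace, Matrix.mul_assoc] using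
    trace_mul_comm (M a * (M x)ᴴ) (M b * (M y)ᴴ * M c * (M z)ᴴ)

variable [Fintype ι] [DecidableEq m] [DecidableEq n] (M : ι → Matrix m n R)

theorem trace_krausMap_one_pow_three :
    (krausMap M 1 ^ 3).trace = ∑ a, ∑ b, ∑ c, sixTrace M a a b b c c := by
  simp only [krausMap, sum_pow_three, sixTrace, Matrix.mul_one, trace_sum, Matrix.mul_assoc]

theorem trace_krausMap_conjTranspose_one_pow_three :
    (krausMap (fun a ↦ (M a)ᴴ) 1 ^ 3).trace = ∑ a, ∑ b, ∑ c, sixTrace M a b b c c a := by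
  simp only [trace_krausMap_one_pow_three, sixTrace, conjTranspose_conjTranspose, Matrix.mul_assoc,
    trace_mul_comm (M _)ᴴ]

theorem trace_krausMap_krausMap_one_mul :
    (krausMap M (krausMap (fun a ↦ (M a)ᴴ) 1) * krausMap M 1).trace =
      ∑ a, ∑ b, ∑ c, sixTrace M a b b a c c := by
  simp only [krausMap, sixTrace, Matrix.mul_one, conjTranspose_conjTranspose, Finset.sum_mul_sum,
    Matrix.mul_sum, Matrix.sum_mul, trace_sum, Matrix.mul_assoc]
  exact Finset.sum_congr rfl fun a _ ↦ Finset.sum_comm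

theorem sum_sixTrace_eq_kempe (M : Fin 2 → Matrix m n R) :
    ∑ a, ∑ b, ∑ c, sixTrace M a b c a b c = kempe M := by
  have antisymm (a b c : Fin 2) :
      sixTrace M a a b b c c + sixTrace M a b b c c a + sixTrace M a c b a c b =
        sixTrace M a b b a c c + sixTrace M b c c b a a + sixTrace M c a a c b b := by
    rw [← sixTrace_cycle M a a b c c b, sixTrace_cycle M c a a c b b]
    exact sum_even_perm_eq_sum_odd_perm (fun x y z ↦ sixTrace M a x b y c z) a b c
  have relabel (F : Fin 2 → Fin 2 → Fin 2 → R) :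
      ∑ a, ∑ b, ∑ c, F a c b = ∑ a, ∑ b, ∑ c, F a b c ∧
      ∑ a, ∑ b, ∑ c, F b c a = ∑ a, ∑ b, ∑ c, F a b c ∧
      ∑ a, ∑ b, ∑ c, F c a b = ∑ a, ∑ b, ∑ c, F a b c := by
    refine ⟨?_, ?_, ?_⟩ <;> simp only [Fin.sum_univ_two] <;> ring
  have summed := congrArg (fun F : Fin 2 → Fin 2 → Fin 2 → R ↦ ∑ a, ∑ b, ∑ c, F a b c)
    (funext₃ antisymm)
  simp only [Finset.sum_add_distrib] at summed
  rw [(relabel fun a b c ↦ sixTrace M a b c a b c).1,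
    (relabel fun a b c ↦ sixTrace M a b b a c c).2.1,
    (relabel fun a b c ↦ sixTrace M a b b a c c).2.2] at summed
  rw [kempe, trace_krausMap_one_pow_three, trace_krausMap_conjTranspose_one_pow_three,
    trace_krausMap_krausMap_one_mul]
  linear_combination summed

end KempeIdentity

theorem isometry_map_star {ι κ R : Type*} [Fintype κ] [DecidableEq ι] [CommRing R] [StarRing R]
    {W : Matrix κ ι R} (hW : Wᴴ * W = 1) : (W.map star)ᴴ * W.map star = 1 := by
  have h : (W.map star)ᴴ = Wᵀ := by
    ext
    simp only [conjTranspose_apply, map_apply, star_star, transpose_apply]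
  rw [h, ← transpose_one, ← hW, transpose_mul]
  rfl

section LocalTransform

variable {ι κ μ m n p q s t R : Type*} [Fintype ι] [Fintype n] [CommRing R]

theorem localTransform_one [DecidableEq ι] [Fintype m] (U : Matrix p m R) (V : Matrix n q R)
    (M : ι → Matrix m n R) : localTransform 1 U V M = fun a ↦ U * M a * V := by
  funext a
  simp only [localTransform, one_apply, ite_smul, one_smul, zero_smul, Finset.sum_ite_eq,
    Finset.mem_univ, if_true]

theorem localTransform_localTransform [Fintype m] [Fintype κ] [Fintype p] [Fintype q]
    (W' : Matrix μ κ R) (U' : Matrix s p R) (V' : Matrix q t R) (W : Matrix κ ι R)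
    (U : Matrix p m R) (V : Matrix n q R) (M : ι → Matrix m n R) :
    localTransform W' U' V' (localTransform W U V M) =
      localTransform (W' * W) (U' * U) (V * V') M := by
  funext a
  simp only [localTransform, Matrix.mul_sum, Matrix.sum_mul, Matrix.mul_smul, Matrix.smul_mul,
    Finset.smul_sum, smul_smul, mul_apply, Finset.sum_smul, Matrix.mul_assoc]
  exact Finset.sum_comm

variable [StarRing R]

theorem conjTranspose_localTransform [Fintype m] (W : Matrix κ ι R) (U : Matrix p m R)
    (V : Matrix n q R) (M : ι → Matrix m n R) (a : κ) :
    (localTransform W U V M a)ᴴ = localTransform (W.map star) Vᴴ Uᴴ (fun b ↦ (M b)ᴴ) a := by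
  simp only [localTransform, conjTranspose_sum, conjTranspose_smul, conjTranspose_mul, map_apply,
    Matrix.mul_assoc]

variable [Fintype κ]

theorem sum_isometry_smul_mul_mul_conjTranspose [DecidableEq ι] {W : Matrix κ ι R}
    (hW : Wᴴ * W = 1) (M : ι → Matrix m n R) (X : Matrix n n R) :
    ∑ a, (∑ b, W a b • M b) * X * (∑ c, W a c • M c)ᴴ = ∑ b, M b * X * (M b)ᴴ := by
  calc ∑ a, (∑ b, W a b • M b) * X * (∑ c, W a c • M c)ᴴ
      = ∑ a, ∑ c, ∑ b, (star (W a c) * W a b) • (M b * X * (M c)ᴴ) := by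
        simp only [conjTranspose_sum, conjTranspose_smul, Matrix.sum_mul, Matrix.mul_sum,
          Matrix.smul_mul, Matrix.mul_smul, Finset.smul_sum, smul_smul]
    _ = ∑ c, ∑ b, (Wᴴ * W) c b • (M b * X * (M c)ᴴ) := by
        simp only [mul_apply, conjTranspose_apply, Finset.sum_smul]
        rw [Finset.sum_comm]
        exact Finset.sum_congr rfl fun c _ ↦ Finset.sum_comm
    _ = ∑ b, M b * X * (M b)ᴴ := by
        simp only [hW, one_apply, ite_smul, one_smul, zero_smul, Finset.sum_ite_eq,
          Finset.mem_univ, if_true]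

variable [DecidableEq ι] {W : Matrix κ ι R}

variable [Fintype m]

theorem krausMap_localTransform [Fintype q] (hW : Wᴴ * W = 1) (U : Matrix p m R)
    (V : Matrix n q R) (M : ι → Matrix m n R) (X : Matrix q q R) :
    krausMap (localTransform W U V M) X = U * krausMap M (V * X * Vᴴ) * Uᴴ := by
  simp only [krausMap, localTransform]
  rw [sum_isometry_smul_mul_mul_conjTranspose hW (fun b ↦ U * M b * V)]
  simp only [conjTranspose_mul, Matrix.mul_sum, Matrix.sum_mul, Matrix.mul_assoc]

theorem krausMap_localTransform_one [Fintype q] [DecidableEq n] [DecidableEq q]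
    (hW : Wᴴ * W = 1) (U : Matrix p m R) {V : Matrix n q R} (hV : V * Vᴴ = 1)
    (M : ι → Matrix m n R) :
    krausMap (localTransform W U V M) 1 = U * krausMap M 1 * Uᴴ := by
  rw [krausMap_localTransform hW, Matrix.mul_one, hV]

variable [Fintype p] [DecidableEq m] {U : Matrix p m R}

theorem krausMap_conjTranspose_localTransform_one [DecidableEq p] (hW : Wᴴ * W = 1)
    (hU : Uᴴ * U = 1) (V : Matrix n q R) (M : ι → Matrix m n R) :
    krausMap (fun a ↦ (localTransform W U V M a)ᴴ) 1 =
      Vᴴ * krausMap (fun a ↦ (M a)ᴴ) 1 * V := by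
  simp only [conjTranspose_localTransform]
  rw [krausMap_localTransform_one (isometry_map_star hW) _ (by rwa [conjTranspose_conjTranspose]),
    conjTranspose_conjTranspose]

theorem conj_mul_conj_of_isometry (hU : Uᴴ * U = 1) (X Y : Matrix m m R) :
    U * X * Uᴴ * (U * Y * Uᴴ) = U * (X * Y) * Uᴴ := by
  simp only [Matrix.mul_assoc, ← Matrix.mul_assoc Uᴴ U, hU, Matrix.one_mul]

theorem trace_conj_of_isometry (hU : Uᴴ * U = 1) (X : Matrix m m R) :
    (U * X * Uᴴ).trace = X.trace := by
  rw [trace_mul_cycle, hU, Matrix.one_mul]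

variable [Fintype q] [DecidableEq n] [DecidableEq p] [DecidableEq q] {V : Matrix n q R}

theorem kempe_localTransform (hW : Wᴴ * W = 1) (hU : Uᴴ * U = 1) (hV : V * Vᴴ = 1)
    (M : ι → Matrix m n R) : kempe (localTransform W U V M) = kempe M := by
  have hV' : Vᴴᴴ * Vᴴ = 1 := by rwa [conjTranspose_conjTranspose]
  have right : krausMap (fun a ↦ (localTransform W U V M a)ᴴ) 1 =
      Vᴴ * krausMap (fun a ↦ (M a)ᴴ) 1 * Vᴴᴴ := by
    rw [krausMap_conjTranspose_localTransform_one hW hU, conjTranspose_conjTranspose]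
  have joint : krausMap (localTransform W U V M)
      (krausMap (fun a ↦ (localTransform W U V M a)ᴴ) 1) =
        U * krausMap M (krausMap (fun a ↦ (M a)ᴴ) 1) * Uᴴ := by
    rw [right, krausMap_localTransform hW]
    simp only [conjTranspose_conjTranspose, Matrix.mul_assoc, hV, ← Matrix.mul_assoc V Vᴴ,
      Matrix.one_mul, Matrix.mul_one]
  rw [kempe, joint, right, krausMap_localTransform_one hW U hV]
  simp only [pow_three, conj_mul_conj_of_isometry hU, conj_mul_conj_of_isometry hV',
    trace_conj_of_isometry hU, trace_conj_of_isometry hV', kempe]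

end LocalTransform

/-- The `2 × 2` matrices `M a` with entries `M a b c = Ψ (a, b, c)`. -/
def slice (Ψ : Q3 → ℂ) (a : Fin 2) : Matrix (Fin 2) (Fin 2) ℂ :=
  of fun b c ↦ Ψ (a, b, c)

open scoped Kronecker in
theorem ptranspose_rhoBC (Ψ : Q3 → ℂ) :
    ptranspose (rhoBC Ψ) = ∑ a, (slice Ψ a ⊗ₖ (slice Ψ a)ᴴ).submatrix id Prod.swap := by
  ext p q
  simp [ptranspose, rhoBC, slice]

theorem I5_eq_re_kempe (Ψ : Q3 → ℂ) : I5 Ψ = (kempe (slice Ψ)).re := by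
  rw [I5, ptranspose_rhoBC, sum_pow_three, ← sum_sixTrace_eq_kempe]
  simp only [trace_sum, trace_kronecker_swap_mul_three, sixTrace]

theorem luequiv_iff_slice {Ψ Ψ' : Q3 → ℂ} :
    LUequiv Ψ Ψ' ↔ ∃ W ∈ unitaryGroup (Fin 2) ℂ, ∃ U ∈ unitaryGroup (Fin 2) ℂ,
      ∃ V ∈ unitaryGroup (Fin 2) ℂ, slice Ψ' = localTransform W U V (slice Ψ) := by
  have entrywise (W U V : Matrix (Fin 2) (Fin 2) ℂ) :
      (∀ v, Ψ' v = ∑ w : Q3, W v.1 w.1 * U v.2.1 w.2.1 * V v.2.2 w.2.2 * Ψ w) ↔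
        slice Ψ' = localTransform W U Vᵀ (slice Ψ) := by
    simp only [funext_iff, ← Matrix.ext_iff, Prod.forall]
    refine forall₃_congr fun a b c ↦ ?_
    simp only [slice, localTransform, Fintype.sum_prod_type, Fin.sum_univ_two, mul_apply, of_apply,
      transpose_apply, Matrix.add_apply, Matrix.smul_apply, smul_eq_mul]
    ring_nf
  constructor
  · rintro ⟨W, U, V, -, hW, -, hU, -, hV, h⟩
    exact ⟨W, mem_unitaryGroup_iff'.2 hW, U, mem_unitaryGroup_iff'.2 hU, Vᵀ,
      transpose_mem_unitaryGroup_iff.2 (mem_unitaryGroup_iff'.2 hV), (entrywise W U V).1 h⟩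
  · rintro ⟨W, hW, U, hU, V, hV, h⟩
    have hV' := transpose_mem_unitaryGroup_iff.2 hV
    exact ⟨W, U, Vᵀ, hW.2, hW.1, hU.2, hU.1, hV'.2, hV'.1,
      (entrywise W U Vᵀ).2 (by rwa [transpose_transpose])⟩

theorem LUequiv.trans {Ψ₁ Ψ₂ Ψ₃ : Q3 → ℂ} (h₁₂ : LUequiv Ψ₁ Ψ₂) (h₂₃ : LUequiv Ψ₂ Ψ₃) :
    LUequiv Ψ₁ Ψ₃ := by
  obtain ⟨W, hW, U, hU, V, hV, h⟩ := luequiv_iff_slice.1 h₁₂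
  obtain ⟨W', hW', U', hU', V', hV', h'⟩ := luequiv_iff_slice.1 h₂₃
  exact luequiv_iff_slice.2 ⟨W' * W, mul_mem hW' hW, U' * U, mul_mem hU' hU, V * V',
    mul_mem hV hV', by rw [h', h, localTransform_localTransform]⟩

theorem LUequiv.I5_eq {Ψ Ψ' : Q3 → ℂ} (h : LUequiv Ψ Ψ') : I5 Ψ = I5 Ψ' := by
  obtain ⟨W, hW, U, hU, V, hV, h⟩ := luequiv_iff_slice.1 h
  rw [I5_eq_re_kempe, I5_eq_re_kempe, h, kempe_localTransform hW.1 hU.1 hV.2]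

section Fiber

variable {ι m n R : Type*}

/-- The vector in the first factor picked out by the basis states `b` and `c` of the other two. -/
def fiber (M : ι → Matrix m n R) (b : m) (c : n) : ι → R :=
  fun a ↦ M a b c

theorem fiber_conjTranspose [Star R] (M : ι → Matrix m n R) (b : m) (c : n) :
    fiber (fun a ↦ (M a)ᴴ) c b = star (fiber M b c) :=
  rfl

variable [Fintype ι] [Fintype n] [DecidableEq n] [CommRing R] [StarRing R]

theorem krausMap_diagonal_apply (M : ι → Matrix m n R) (γ : n → R) (b b' : m) :
    krausMap M (diagonal γ) b b' = ∑ c, star (fiber M b' c) ⬝ᵥ fiber M b c * γ c := by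
  simp only [krausMap, Matrix.sum_apply, mul_apply (N := (M _)ᴴ), mul_diagonal,
    conjTranspose_apply, dotProduct, Pi.star_apply, fiber, Finset.sum_mul]
  rw [Finset.sum_comm]
  exact Finset.sum_congr rfl fun c _ ↦ Finset.sum_congr rfl fun a _ ↦ by ring

theorem krausMap_one_apply (M : ι → Matrix m n R) (b b' : m) :
    krausMap M 1 b b' = ∑ c, star (fiber M b' c) ⬝ᵥ fiber M b c := by
  simp only [← diagonal_one, krausMap_diagonal_apply, mul_one]

theorem isHermitian_krausMap_one (M : ι → Matrix m n R) : (krausMap M 1).IsHermitian := by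
  simp only [krausMap, IsHermitian, conjTranspose_sum, Matrix.mul_one, conjTranspose_mul,
    conjTranspose_conjTranspose]

end Fiber

section Weight

variable {ι m n : Type*} [Fintype ι]

/-- The squared norms of the coefficients `M a b c`, summed over `a`: for a unit vector, the joint
distribution of the outcomes of measuring the second and third factors. -/
def weight (M : ι → Matrix m n ℂ) : Matrix m n ℝ :=
  of fun b c ↦ ∑ a, ‖M a b c‖ ^ 2

theorem weight_conjTranspose (M : ι → Matrix m n ℂ) :
    weight (fun a ↦ (M a)ᴴ) = (weight M)ᵀ := by
  ext
  simp only [weight, of_apply, transpose_apply, conjTranspose_apply, norm_star]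

theorem weight_nonneg (M : ι → Matrix m n ℂ) (b : m) (c : n) : 0 ≤ weight M b c :=
  Finset.sum_nonneg fun _ _ ↦ sq_nonneg _

theorem star_fiber_dotProduct_fiber (M : ι → Matrix m n ℂ) (b : m) (c : n) :
    star (fiber M b c) ⬝ᵥ fiber M b c = weight M b c := by
  simp only [dotProduct, weight, of_apply, Complex.ofReal_sum, Complex.ofReal_pow,
    ← Complex.conj_mul']
  rfl

open scoped ComplexOrder in
theorem fiber_eq_zero {M : ι → Matrix m n ℂ} {b : m} {c : n} (h : weight M b c = 0) :
    fiber M b c = 0 := by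
  rw [← dotProduct_star_self_eq_zero, star_fiber_dotProduct_fiber, h, Complex.ofReal_zero]

variable [Fintype n] [DecidableEq n]

theorem krausMap_one_apply_self (M : ι → Matrix m n ℂ) (b : m) :
    krausMap M 1 b b = (∑ c, weight M b c : ℝ) := by
  rw [krausMap_one_apply, Complex.ofReal_sum]
  exact Finset.sum_congr rfl fun c _ ↦ star_fiber_dotProduct_fiber M b c

theorem krausMap_one_eq_diagonal [DecidableEq m] {M : ι → Matrix m n ℂ}
    (h : (krausMap M 1).IsDiag) :
    krausMap M 1 = diagonal fun b ↦ ((∑ c, weight M b c : ℝ) : ℂ) := by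
  rw [← h.diagonal_diag]
  exact congrArg diagonal (funext (krausMap_one_apply_self M))

variable [Fintype m]

theorem trace_krausMap_one (M : ι → Matrix m n ℂ) :
    (krausMap M 1).trace = (∑ b, ∑ c, weight M b c : ℝ) := by
  simp only [trace, diag_apply, krausMap_one_apply_self, ← Complex.ofReal_sum]

/-- Kempe's invariant in terms of the joint distribution `P` of the second and third factors, for a
vector whose marginals on these factors are diagonal. -/
def kempeOfWeight (P : Matrix m n ℝ) : ℝ :=
  3 * ∑ b, ∑ c, P b c * (∑ c', P b c') * (∑ b', P b' c)
    - ∑ b, (∑ c, P b c) ^ 3 - ∑ c, (∑ b, P b c) ^ 3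

theorem kempe_eq_kempeOfWeight [DecidableEq m] {M : ι → Matrix m n ℂ}
    (hrow : (krausMap M 1).IsDiag) (hcol : (krausMap (fun a ↦ (M a)ᴴ) 1).IsDiag) :
    kempe M = kempeOfWeight (weight M) := by
  have hcol' := krausMap_one_eq_diagonal hcol
  simp only [weight_conjTranspose, transpose_apply] at hcol'
  rw [kempe, hcol', krausMap_one_eq_diagonal hrow]
  simp only [kempeOfWeight, trace, diag_apply, mul_diagonal, krausMap_diagonal_apply,
    star_fiber_dotProduct_fiber, diagonal_pow, diagonal_apply_eq, Pi.pow_apply, Finset.sum_mul]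
  push_cast
  simp only [mul_right_comm]

end Weight

section RealInequality

theorem one_sub_mul_mul_one_sub_sub_eq (x y : ℝ) :
    4 * (1 - 27 * (x * y * (1 - x - y))) =
      (2 - 3 * (x + y)) ^ 2 * (1 + 3 * (x + y)) + 27 * ((x - y) ^ 2 * (1 - (x + y))) := by
  ring

theorem mul_mul_one_sub_sub_le {x y : ℝ} (hx : 0 ≤ x) (hy : 0 ≤ y) :
    x * y * (1 - x - y) ≤ 1 / 27 := by
  rcases le_total (x + y) 1 with h | h
  · have hsum : 0 ≤ (2 - 3 * (x + y)) ^ 2 * (1 + 3 * (x + y)) := by positivity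
    have hdiff : 0 ≤ (x - y) ^ 2 * (1 - (x + y)) :=
      mul_nonneg (sq_nonneg _) (sub_nonneg.2 h)
    linarith [one_sub_mul_mul_one_sub_sub_eq x y]
  · calc x * y * (1 - x - y) ≤ 0 :=
          mul_nonpos_of_nonneg_of_nonpos (mul_nonneg hx hy) (by linarith)
      _ ≤ 1 / 27 := by norm_num

theorem eq_one_third_of_mul_mul_one_sub_sub_eq {x y : ℝ} (hx : 0 ≤ x) (hy : 0 ≤ y)
    (h : x * y * (1 - x - y) = 1 / 27) : x = 1 / 3 ∧ y = 1 / 3 := by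
  have sum_lt : 0 < 1 - (x + y) := by
    rw [← sub_sub]
    exact pos_of_mul_pos_right (by rw [h]; norm_num) (mul_nonneg hx hy)
  have sum_zero := one_sub_mul_mul_one_sub_sub_eq x y
  rw [h, eq_comm, mul_one_div_cancel (by norm_num), sub_self, mul_zero,
    add_eq_zero_iff_of_nonneg (by positivity) (by positivity)] at sum_zero
  have hsum : 2 - 3 * (x + y) = 0 :=
    pow_eq_zero_iff two_ne_zero |>.1 ((mul_eq_zero.1 sum_zero.1).resolve_right (by positivity))
  have hdiff : x - y = 0 := by
    simpa [sum_lt.ne'] using sum_zero.2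
  constructor <;> linarith

theorem kempeOfWeight_fin_two {P : Matrix (Fin 2) (Fin 2) ℝ} {x y : ℝ}
    (hP : ∑ b, ∑ c, P b c = 1) (hx : ∑ c, P 0 c - ∑ c, P 1 c = x)
    (hy : ∑ b, P b 0 - ∑ b, P b 1 = y) :
    kempeOfWeight P = 1 / 4 - 3 / 4 * (x * y * (1 - x - y)) + 3 * (x * y) * P 1 1 := by
  simp only [Fin.sum_univ_two] at hP hx hy
  simp only [kempeOfWeight, Fin.sum_univ_two]
  subst hx hy
  have h00 : P 0 0 = 1 - P 0 1 - P 1 0 - P 1 1 := by linarith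
  rw [h00]
  ring

variable {P : Matrix (Fin 2) (Fin 2) ℝ}

theorem two_div_nine_le_kempeOfWeight (hP : ∑ b, ∑ c, P b c = 1) (h11 : 0 ≤ P 1 1)
    (hrow : Antitone fun b ↦ ∑ c, P b c) (hcol : Antitone fun c ↦ ∑ b, P b c) :
    2 / 9 ≤ kempeOfWeight P := by
  have hx := sub_nonneg.2 (hrow zero_le_one)
  have hy := sub_nonneg.2 (hcol zero_le_one)
  rw [kempeOfWeight_fin_two hP rfl rfl]
  nlinarith [mul_mul_one_sub_sub_le hx hy, mul_nonneg (mul_nonneg hx hy) h11]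

theorem eq_of_kempeOfWeight_eq_two_div_nine (hP : ∑ b, ∑ c, P b c = 1) (h11 : 0 ≤ P 1 1)
    (hrow : Antitone fun b ↦ ∑ c, P b c) (hcol : Antitone fun c ↦ ∑ b, P b c)
    (h : kempeOfWeight P = 2 / 9) : P = !![1 / 3, 1 / 3; 1 / 3, 0] := by
  have hx := sub_nonneg.2 (hrow zero_le_one)
  have hy := sub_nonneg.2 (hcol zero_le_one)
  rw [kempeOfWeight_fin_two hP rfl rfl] at h
  obtain ⟨hx', hy'⟩ := eq_one_third_of_mul_mul_one_sub_sub_eq hx hy <|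
    (mul_mul_one_sub_sub_le hx hy).antisymm <| by
      nlinarith [mul_nonneg (mul_nonneg hx hy) h11]
  rw [hx', hy'] at h
  simp only [Fin.sum_univ_two] at hP hx' hy'
  ext b c
  fin_cases b <;> fin_cases c <;> simp <;> linarith

end RealInequality

section SortedMarginals

theorem exists_antitone_diagonalization {k : ℕ} {H : Matrix (Fin k) (Fin k) ℂ}
    (hH : H.IsHermitian) : ∃ U ∈ unitaryGroup (Fin k) ℂ, ∃ d : Fin k → ℝ, Antitone d ∧
      Uᴴ * H * U = diagonal fun i ↦ (d i : ℂ) := by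
  let E : Matrix (Fin k) (Fin k) ℂ := hH.eigenvectorUnitary
  have hE : Eᴴ * E = 1 := hH.eigenvectorUnitary.2.1
  have hEH : Eᴴ * H * E = diagonal fun i ↦ (hH.eigenvalues i : ℂ) :=
    (Unitary.conjStarAlgAut_star_apply (S := ℂ) _ _).symm.trans
      hH.conjStarAlgAut_star_eigenvectorUnitary
  let σ := Tuple.sort (OrderDual.toDual ∘ hH.eigenvalues)
  refine ⟨E.submatrix id σ, mem_unitaryGroup_iff'.2 ?_, hH.eigenvalues ∘ σ,
    Tuple.monotone_sort (OrderDual.toDual ∘ hH.eigenvalues), ?_⟩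
  · change (Eᴴ * E).submatrix σ σ = 1
    rw [hE, submatrix_one_equiv]
  · change (Eᴴ * H * E).submatrix σ σ = _
    rw [hEH, submatrix_diagonal_equiv]
    rfl

variable {ι m n : Type*} [Fintype ι] [Fintype n]

/-- The marginals of the vector with coefficients `M a b c` on the second and third factors are
diagonal with decreasing diagonals; every vector is locally unitarily equivalent to one of this
form. -/
structure HasSortedMarginals [Fintype m] [DecidableEq m] [DecidableEq n] [Preorder m]
    [Preorder n] (M : ι → Matrix m n ℂ) : Prop where
  isDiag_left : (krausMap M 1).IsDiag
  isDiag_right : (krausMap (fun a ↦ (M a)ᴴ) 1).IsDiag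
  antitone_row : Antitone fun b ↦ ∑ c, weight M b c
  antitone_col : Antitone fun c ↦ ∑ b, weight M b c

theorem exists_hasSortedMarginals {j k : ℕ} (M : ι → Matrix (Fin j) (Fin k) ℂ) :
    ∃ U ∈ unitaryGroup (Fin j) ℂ, ∃ V ∈ unitaryGroup (Fin k) ℂ,
      HasSortedMarginals fun a ↦ Uᴴ * M a * V := by
  classical
  obtain ⟨U, hU, β, hβ, hUβ⟩ := exists_antitone_diagonalization (isHermitian_krausMap_one M)
  obtain ⟨V, hV, γ, hγ, hVγ⟩ :=
    exists_antitone_diagonalization (isHermitian_krausMap_one fun a ↦ (M a)ᴴ)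
  have hone : (1 : Matrix ι ι ℂ)ᴴ * 1 = 1 := by rw [conjTranspose_one, Matrix.one_mul]
  have left : krausMap (fun a ↦ Uᴴ * M a * V) 1 = diagonal fun b ↦ (β b : ℂ) := by
    rw [← localTransform_one, krausMap_localTransform_one hone _ hV.2,
      conjTranspose_conjTranspose, hUβ]
  have right : krausMap (fun a ↦ (Uᴴ * M a * V)ᴴ) 1 = diagonal fun c ↦ (γ c : ℂ) := by
    rw [← hVγ, ← krausMap_conjTranspose_localTransform_one hone (U := Uᴴ) (by
      rw [conjTranspose_conjTranspose]; exact hU.2), localTransform_one]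
  have row (b : Fin j) : ∑ c, weight (fun a ↦ Uᴴ * M a * V) b c = β b := by
    have := krausMap_one_apply_self (fun a ↦ Uᴴ * M a * V) b
    rw [left, diagonal_apply_eq] at this
    exact_mod_cast this.symm
  have col (c : Fin k) : ∑ b, weight (fun a ↦ Uᴴ * M a * V) b c = γ c := by
    have := krausMap_one_apply_self (fun a ↦ (Uᴴ * M a * V)ᴴ) c
    rw [right, diagonal_apply_eq, weight_conjTranspose] at this
    exact_mod_cast this.symm
  refine ⟨U, hU, V, hV, ?_, ?_, ?_, ?_⟩
  · exact left ▸ isDiag_diagonal _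
  · exact right ▸ isDiag_diagonal _
  · simpa only [row] using hβ
  · simpa only [col] using hγ

end SortedMarginals

theorem exists_luequiv_hasSortedMarginals (Ψ : Q3 → ℂ) :
    ∃ Φ, LUequiv Φ Ψ ∧ HasSortedMarginals (slice Φ) := by
  obtain ⟨U, hU, V, hV, h⟩ := exists_hasSortedMarginals (slice Ψ)
  refine ⟨fun v ↦ (Uᴴ * slice Ψ v.1 * V) v.2.1 v.2.2, ?_, h⟩
  refine luequiv_iff_slice.2 ⟨1, one_mem _, U, hU, Vᴴ, Unitary.star_mem hV, ?_⟩
  have undo (a : Fin 2) : U * (Uᴴ * slice Ψ a * V) * Vᴴ = slice Ψ a := by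
    have hUU : U * Uᴴ = 1 := hU.2
    have hVV : V * Vᴴ = 1 := hV.2
    rw [← Matrix.mul_assoc, ← Matrix.mul_assoc, hUU, Matrix.one_mul, Matrix.mul_assoc, hVV,
      Matrix.mul_one]
  rw [localTransform_one]
  exact (funext undo).symm

theorem sum_norm_sq_eq_sum_weight (Ψ : Q3 → ℂ) :
    ∑ v, ‖Ψ v‖ ^ 2 = ∑ b, ∑ c, weight (slice Ψ) b c := by
  simp only [Fintype.sum_prod_type, weight, slice, of_apply]
  rw [Finset.sum_comm]
  exact Finset.sum_congr rfl fun b _ ↦ Finset.sum_comm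

theorem LUequiv.sum_norm_sq_eq {Ψ Ψ' : Q3 → ℂ} (h : LUequiv Ψ Ψ') :
    ∑ v, ‖Ψ v‖ ^ 2 = ∑ v, ‖Ψ' v‖ ^ 2 := by
  obtain ⟨W, hW, U, hU, V, hV, h⟩ := luequiv_iff_slice.1 h
  have traces : (krausMap (slice Ψ') 1).trace = (krausMap (slice Ψ) 1).trace := by
    rw [h, krausMap_localTransform_one hW.1 U hV.2, trace_conj_of_isometry hU.1]
  rw [trace_krausMap_one, trace_krausMap_one, ← sum_norm_sq_eq_sum_weight,
    ← sum_norm_sq_eq_sum_weight] at traces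
  exact_mod_cast traces.symm

section EqualityCase

section Orthonormal

variable {R : Type*} [CommRing R] [StarRing R]

theorem transpose_of_pair_mem_unitaryGroup {f g : Fin 2 → R} (hf : star f ⬝ᵥ f = 1)
    (hg : star g ⬝ᵥ g = 1) (hfg : star f ⬝ᵥ g = 0) : (of ![f, g])ᵀ ∈ unitaryGroup (Fin 2) R := by
  have hgf : star g ⬝ᵥ f = 0 := by
    rw [← star_eq_zero, ← star_dotProduct, hfg]
  refine mem_unitaryGroup_iff'.2 (Matrix.ext fun i j ↦ ?_)
  fin_cases i <;> fin_cases j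
  exacts [hf, hfg, hgf, hg]

-- In dimension two, `f` and `f'` both span the orthogonal complement of `g`.
theorem exists_phase_of_orthogonal {f f' g : Fin 2 → R} (hf : star f ⬝ᵥ f = 1)
    (hf' : star f' ⬝ᵥ f' = 1) (hg : star g ⬝ᵥ g = 1) (hfg : star f ⬝ᵥ g = 0)
    (hgf' : star g ⬝ᵥ f' = 0) : ∃ e : R, star e * e = 1 ∧ f' = e • f := by
  let Q := (of ![f, g])ᵀ
  have hQ : Q * Qᴴ = 1 := (transpose_of_pair_mem_unitaryGroup hf hg hfg).2
  have coords : Qᴴ *ᵥ f' = ![star f ⬝ᵥ f', 0] := by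
    ext i
    fin_cases i
    · rfl
    · exact hgf'
  have hphase : f' = (star f ⬝ᵥ f') • f := by
    calc f' = Q *ᵥ (Qᴴ *ᵥ f') := by rw [mulVec_mulVec, hQ, one_mulVec]
      _ = (star f ⬝ᵥ f') • f := by
        rw [coords]
        ext i
        simp [Q, mulVec, dotProduct, mul_comm]
  refine ⟨_, ?_, hphase⟩
  rwa [hphase, star_smul, smul_dotProduct, dotProduct_smul, hf, smul_eq_mul, smul_eq_mul,
    mul_one] at hf'

theorem diagonal_one_phase_mem_unitaryGroup {e : R} (he : star e * e = 1) :
    diagonal ![1, e] ∈ unitaryGroup (Fin 2) R := by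
  refine mem_unitaryGroup_iff'.2 ?_
  rw [star_eq_conjTranspose, diagonal_conjTranspose, diagonal_mul_diagonal, diagonal_eq_one]
  ext i
  fin_cases i
  · exact (mul_one _).trans (star_one R)
  · exact he

end Orthonormal

theorem localTransform_slice_Wstate (f g : Fin 2 → ℂ) (e : ℂ) :
    localTransform (of ![f, g])ᵀ (diagonal ![1, e]) 1 (slice Wstate) =
      fun a ↦ (√3 : ℂ)⁻¹ • !![g a, f a; e * f a, 0] := by
  ext a b c
  fin_cases b <;> fin_cases c <;>
    simp [localTransform, slice, Wstate, Matrix.add_apply, mul_comm, mul_assoc, mul_left_comm]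

theorem exists_localTransform_slice_Wstate_of_orthonormal {f f' g : Fin 2 → ℂ}
    (hf : star f ⬝ᵥ f = 1) (hf' : star f' ⬝ᵥ f' = 1) (hg : star g ⬝ᵥ g = 1)
    (hfg : star f ⬝ᵥ g = 0) (hgf' : star g ⬝ᵥ f' = 0) :
    ∃ W ∈ unitaryGroup (Fin 2) ℂ, ∃ U ∈ unitaryGroup (Fin 2) ℂ, ∃ V ∈ unitaryGroup (Fin 2) ℂ,
      localTransform W U V (slice Wstate) =
        fun a ↦ (√3 : ℂ)⁻¹ • !![g a, f a; f' a, 0] := by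
  obtain ⟨e, he, rfl⟩ := exists_phase_of_orthogonal hf hf' hg hfg hgf'
  exact ⟨_, transpose_of_pair_mem_unitaryGroup hf hg hfg, _,
    diagonal_one_phase_mem_unitaryGroup he, 1, one_mem _, localTransform_slice_Wstate f g e⟩

theorem star_sqrt_smul_dotProduct_sqrt_smul {ι : Type*} [Fintype ι] {r : ℝ} (hr : 0 ≤ r)
    (v w : ι → ℂ) : star ((√r : ℂ) • v) ⬝ᵥ (√r : ℂ) • w = r * (star v ⬝ᵥ w) := by
  rw [star_smul, smul_dotProduct, dotProduct_smul, smul_smul, Complex.star_def,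
    Complex.conj_ofReal, ← Complex.ofReal_mul, Real.mul_self_sqrt hr, smul_eq_mul]

theorem exists_localTransform_slice_Wstate {M : Fin 2 → Matrix (Fin 2) (Fin 2) ℂ}
    (hM : weight M = !![1 / 3, 1 / 3; 1 / 3, 0]) (hrow : (krausMap M 1).IsDiag)
    (hcol : (krausMap (fun a ↦ (M a)ᴴ) 1).IsDiag) :
    ∃ W ∈ unitaryGroup (Fin 2) ℂ, ∃ U ∈ unitaryGroup (Fin 2) ℂ,
      ∃ V ∈ unitaryGroup (Fin 2) ℂ, M = localTransform W U V (slice Wstate) := by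
  have scaled := star_sqrt_smul_dotProduct_sqrt_smul (ι := Fin 2) zero_le_three
  have unit {b c : Fin 2} (h : weight M b c = 1 / 3) :
      star ((√3 : ℂ) • fiber M b c) ⬝ᵥ (√3 : ℂ) • fiber M b c = 1 := by
    rw [scaled, star_fiber_dotProduct_fiber, h]
    norm_num
  have h11 : fiber M 1 1 = 0 := fiber_eq_zero (congrFun₂ hM 1 1)
  have orthogonal_col : star (fiber M 0 1) ⬝ᵥ fiber M 0 0 = 0 := by
    have offDiag := hcol one_ne_zero
    simpa only [krausMap_one_apply, fiber_conjTranspose, Fin.sum_univ_two, h11, star_star,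
      star_zero, dotProduct_zero, zero_dotProduct, add_zero, dotProduct_comm] using offDiag
  have orthogonal_row : star (fiber M 0 0) ⬝ᵥ fiber M 1 0 = 0 := by
    have offDiag := hrow one_ne_zero
    simpa only [krausMap_one_apply, Fin.sum_univ_two, h11, dotProduct_zero, add_zero] using offDiag
  obtain ⟨W, hW, U, hU, V, hV, h⟩ := exists_localTransform_slice_Wstate_of_orthonormal
    (unit (congrFun₂ hM 0 1)) (unit (congrFun₂ hM 1 0)) (unit (congrFun₂ hM 0 0))
    ((scaled _ _).trans (mul_eq_zero_of_right _ orthogonal_col))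
    ((scaled _ _).trans (mul_eq_zero_of_right _ orthogonal_row))
  refine ⟨W, hW, U, hU, V, hV, ?_⟩
  rw [h]
  ext a b c
  have h11a : M a 1 1 = 0 := congrFun h11 a
  fin_cases b <;> fin_cases c <;> simp [fiber, h11a]

end EqualityCase

theorem weight_slice_Wstate : weight (slice Wstate) = !![1 / 3, 1 / 3; 1 / 3, 0] := by
  ext b c
  fin_cases b <;> fin_cases c <;> simp [weight, slice, Wstate]

theorem isDiag_krausMap_slice_Wstate : (krausMap (slice Wstate) 1).IsDiag := by
  intro b b' h
  fin_cases b <;> fin_cases b' <;> simp [krausMap, slice, Wstate, mul_apply] at h ⊢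

theorem isDiag_krausMap_conjTranspose_slice_Wstate :
    (krausMap (fun a ↦ (slice Wstate a)ᴴ) 1).IsDiag := by
  intro b b' h
  fin_cases b <;> fin_cases b' <;> simp [krausMap, slice, Wstate, mul_apply] at h ⊢

theorem I5_Wstate : I5 Wstate = 2 / 9 := by
  rw [I5_eq_re_kempe, kempe_eq_kempeOfWeight isDiag_krausMap_slice_Wstate
    isDiag_krausMap_conjTranspose_slice_Wstate, weight_slice_Wstate, Complex.ofReal_re]
  norm_num [kempeOfWeight, Fin.sum_univ_two]

theorem I5_lower_bound
    (Ψ : Q3 → ℂ) (hΨ : ∑ v : Q3, ‖Ψ v‖ ^ 2 = 1) :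
    2 / 9 ≤ I5 Ψ ∧ (I5 Ψ = 2 / 9 ↔ LUequiv Wstate Ψ) := by
  obtain ⟨Φ, hΦΨ, hΦ⟩ := exists_luequiv_hasSortedMarginals Ψ
  have htotal : ∑ b, ∑ c, weight (slice Φ) b c = 1 := by
    rw [← sum_norm_sq_eq_sum_weight, hΦΨ.sum_norm_sq_eq, hΨ]
  have hI5 : I5 Ψ = kempeOfWeight (weight (slice Φ)) := by
    rw [← hΦΨ.I5_eq, I5_eq_re_kempe, kempe_eq_kempeOfWeight hΦ.isDiag_left hΦ.isDiag_right,
      Complex.ofReal_re]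
  have h11 := weight_nonneg (slice Φ) 1 1
  refine ⟨hI5 ▸ two_div_nine_le_kempeOfWeight htotal h11 hΦ.antitone_row hΦ.antitone_col,
    fun heq ↦ ?_, fun h ↦ h.I5_eq.symm.trans I5_Wstate⟩
  have hweight := eq_of_kempeOfWeight_eq_two_div_nine htotal h11 hΦ.antitone_row
    hΦ.antitone_col (hI5.symm.trans heq)
  exact .trans (luequiv_iff_slice.2 <|
    exists_localTransform_slice_Wstate hweight hΦ.isDiag_left hΦ.isDiag_right) hΦΨ

end
end
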